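/- arXiv:2407.20035 — 2 statements merged into one kernel-verified Lean document; each statement's English description precedes it below -/
import Mathlib

section
/- If w is a bounded smooth solution of Δw - (1/2) y·∇w - w/(p-1) + |w|^{p-1}w = 0 on ℝ^n with appropriate Gaussian-weighted integrability, then for each coordinate index i, (1/4)∫ y_i |∇w|² ρ dy + (1/(4(p-1)))∫ y_i w² ρ dy - (1/(2(p+1)))∫ y_i |w|^{p+1} ρ dy = 0. -/
open MeasureTheory Real

noncomputable def lap {n : ℕ} (w : EuclideanSpace ℝ (Fin n) → ℝ)
    (y : EuclideanSpace ℝ (Fin n)) : ℝ :=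
  ∑ i, fderiv ℝ (fun z => fderiv ℝ w z (EuclideanSpace.single i 1)) y
      (EuclideanSpace.single i 1)

noncomputable def rho (n : ℕ) (y : EuclideanSpace ℝ (Fin n)) : ℝ :=
  (4 * Real.pi) ^ (-(n : ℝ) / 2) * Real.exp (-‖y‖ ^ 2 / 4)

/-- Continuous and bounded. -/
def CBdd {n : ℕ} (G : EuclideanSpace ℝ (Fin n) → ℝ) : Prop :=
  Continuous G ∧ ∃ C : ℝ, ∀ y, |G y| ≤ C

lemma CBdd.mul {n : ℕ} {F G : EuclideanSpace ℝ (Fin n) → ℝ} (hF : CBdd F) (hG : CBdd G) :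
    CBdd (fun y => F y * G y) := by
  obtain ⟨hF, C, hC⟩ := hF
  obtain ⟨hG, D, hD⟩ := hG
  refine ⟨hF.mul hG, C * D, fun y => ?_⟩
  rw [abs_mul]
  exact mul_le_mul (hC y) (hD y) (abs_nonneg _) ((abs_nonneg _).trans (hC y))

lemma CBdd.add {n : ℕ} {F G : EuclideanSpace ℝ (Fin n) → ℝ} (hF : CBdd F) (hG : CBdd G) :
    CBdd (fun y => F y + G y) := by
  obtain ⟨hF, C, hC⟩ := hF
  obtain ⟨hG, D, hD⟩ := hG
  exact ⟨hF.add hG, C + D, fun y => (abs_add_le _ _).trans (add_le_add (hC y) (hD y))⟩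

lemma CBdd.sum {n : ℕ} {F : Fin n → EuclideanSpace ℝ (Fin n) → ℝ} (hF : ∀ j, CBdd (F j)) :
    CBdd (fun y => ∑ j, F j y) := by
  choose hc C hC using hF
  exact ⟨continuous_finsetSum _ fun j _ => hc j, ∑ j, C j,
    fun y => (Finset.abs_sum_le_sum_abs _ _).trans (Finset.sum_le_sum fun j _ => hC j y)⟩

lemma CBdd.comp {n : ℕ} {F : EuclideanSpace ℝ (Fin n) → ℝ} (hF : CBdd F) {φ : ℝ → ℝ}
    (hφ : Continuous φ) : CBdd (fun y => φ (F y)) := by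
  obtain ⟨hF, C, hC⟩ := hF
  obtain ⟨D, hD⟩ := (isCompact_Icc (a := -C) (b := C)).exists_bound_of_continuousOn hφ.continuousOn
  exact ⟨hφ.comp hF, D, fun y => hD _ (abs_le.mp (hC y))⟩

lemma rexp_integrable (n : ℕ) {b : ℝ} (hb : 0 < b) :
    Integrable (fun y : EuclideanSpace ℝ (Fin n) => Real.exp (-b * ‖y‖ ^ 2)) := by
  have h := GaussianFourier.integrable_cexp_neg_mul_sq_norm_add
    (V := EuclideanSpace ℝ (Fin n)) (b := (b : ℂ)) (by simpa using hb) 0 0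
  have h2 := h.norm
  refine h2.congr (Filter.Eventually.of_forall fun y => ?_)
  simp only [Complex.norm_exp]
  congr 1
  simp [← Complex.ofReal_pow, ← Complex.ofReal_neg, ← Complex.ofReal_mul]

lemma rho_cont (n : ℕ) : Continuous (rho n) := by
  unfold rho; fun_prop

lemma rho_nonneg (n : ℕ) (y : EuclideanSpace ℝ (Fin n)) : 0 ≤ rho n y := by
  unfold rho; positivity

lemma rho_int (n : ℕ) : Integrable (rho n) := by
  have h := (rexp_integrable n (b := 1 / 4) (by norm_num)).const_mul
    ((4 * Real.pi) ^ (-(n : ℝ) / 2))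
  refine h.congr (Filter.Eventually.of_forall fun y => ?_)
  simp only [rho]
  congr 2
  ring

lemma coord_rho_int (n : ℕ) (j : Fin n) : Integrable (fun y => y j * rho n y) := by
  have h := (rexp_integrable n (b := 1 / 8) (by norm_num)).const_mul
    (2 * (4 * Real.pi) ^ (-(n : ℝ) / 2))
  refine h.mono' (Continuous.aestronglyMeasurable ?_) (Filter.Eventually.of_forall fun y => ?_)
  · have := rho_cont n
    fun_prop
  have h1 : |y j| ≤ ‖y‖ := by simpa using PiLp.norm_apply_le y j
  have h2 : ‖y‖ ≤ 2 * Real.exp (‖y‖ ^ 2 / 8) := by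
    have := Real.add_one_le_exp (‖y‖ ^ 2 / 8)
    nlinarith [sq_nonneg (‖y‖ - 2)]
  have h3 : Real.exp (-‖y‖ ^ 2 / 4)
      = Real.exp (-(1 / 8) * ‖y‖ ^ 2) * Real.exp (-(1 / 8) * ‖y‖ ^ 2) := by
    rw [← Real.exp_add]; congr 1; ring
  have h4 : Real.exp (‖y‖ ^ 2 / 8) * Real.exp (-(1 / 8) * ‖y‖ ^ 2) = 1 := by
    rw [← Real.exp_add, Real.exp_eq_one_iff]; ring
  rw [norm_mul, Real.norm_eq_abs, Real.norm_of_nonneg (rho_nonneg n y), rho, h3]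
  set E := Real.exp (-(1 / 8) * ‖y‖ ^ 2)
  set c := (4 * Real.pi) ^ (-(n : ℝ) / 2)
  have hc : 0 ≤ c := by positivity
  have hE : 0 ≤ E := by positivity
  calc |y j| * (c * (E * E)) ≤ (2 * Real.exp (‖y‖ ^ 2 / 8)) * (c * (E * E)) := by
        gcongr; exact h1.trans h2
    _ = 2 * c * E * (Real.exp (‖y‖ ^ 2 / 8) * E) := by ring
    _ = 2 * c * E := by rw [h4, mul_one]

lemma CBdd.int_mul {n : ℕ} {G : EuclideanSpace ℝ (Fin n) → ℝ} (hG : CBdd G)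
    {f : EuclideanSpace ℝ (Fin n) → ℝ} (hf : Integrable f) : Integrable (fun y => f y * G y) := by
  obtain ⟨hc, C, hC⟩ := hG
  exact hf.mul_bdd (c := C) hc.aestronglyMeasurable (Filter.Eventually.of_forall hC)

lemma rho_line (n : ℕ) (j : Fin n) (y : EuclideanSpace ℝ (Fin n)) :
    HasLineDerivAt ℝ (rho n) (-(1 / 2) * (y j * rho n y)) y (EuclideanSpace.single j 1) := by
  have h1 : HasFDerivAt (fun y : EuclideanSpace ℝ (Fin n) => ‖y‖ ^ 2) (2 • innerSL ℝ y) y :=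
    (hasStrictFDerivAt_norm_sq y).hasFDerivAt
  have h2 := ((h1.const_mul (-(1 / 4))).exp.const_mul ((4 * Real.pi) ^ (-(n : ℝ) / 2))).hasLineDerivAt
    (EuclideanSpace.single j 1)
  have e : rho n = fun y => (4 * Real.pi) ^ (-(n : ℝ) / 2) * Real.exp (-(1 / 4) * ‖y‖ ^ 2) := by
    funext y; simp only [rho]; congr 2; ring
  have e2 : -(1 / 2) * (y j * rho n y) = (((4 * Real.pi) ^ (-(n : ℝ) / 2)) •
      (Real.exp (-(1 / 4) * ‖y‖ ^ 2) • ((-(1 / 4) : ℝ) • (2 • innerSL ℝ y))))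
        (EuclideanSpace.single j 1) := by
    rw [e]
    simp [EuclideanSpace.inner_single_right]
    ring
  rw [e2, e]
  exact h2

lemma key {n : ℕ} (j : Fin n) {G G' : EuclideanSpace ℝ (Fin n) → ℝ} (hG : CBdd G) (hG' : CBdd G')
    (hd : ∀ y, ∃ L : EuclideanSpace ℝ (Fin n) →L[ℝ] ℝ, HasFDerivAt G L y ∧
      L (EuclideanSpace.single j 1) = G' y) :
    Integrable (fun y => rho n y * G' y - (1 / 2) * (y j * rho n y) * G y) ∧
      ∫ y, (rho n y * G' y - (1 / 2) * (y j * rho n y) * G y) = 0 := by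
  have i1 := hG'.int_mul (rho_int n)
  have i2 := hG.int_mul ((coord_rho_int n j).const_mul (1 / 2))
  have i3 := hG.int_mul ((coord_rho_int n j).const_mul (-(1 / 2)))
  have i4 := hG.int_mul (rho_int n)
  refine ⟨i1.sub i2, ?_⟩
  rw [integral_sub i1 i2]
  have := integral_bilinear_hasLineDerivAt_right_eq_neg_left_of_integrable
    (B := ContinuousLinearMap.mul ℝ ℝ) (μ := volume) i3 i1 i4
    (fun y _ => rho_line n j y) (fun y _ => by
      obtain ⟨L, h1, h2⟩ := hd y
      rw [← h2]
      exact h1.hasLineDerivAt _)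
  simp only [ContinuousLinearMap.mul_apply'] at this
  rw [this, ← integral_neg, sub_eq_zero]
  congr 1
  funext y
  ring

lemma norm_sq_dual {n : ℕ} (L : EuclideanSpace ℝ (Fin n) →L[ℝ] ℝ) :
    ‖L‖ ^ 2 = ∑ j, L (EuclideanSpace.single j 1) ^ 2 := by
  have h := EuclideanSpace.real_norm_sq_eq ((InnerProductSpace.toDual ℝ _).symm L)
  rw [LinearIsometryEquiv.norm_map] at h
  rw [h]
  refine Finset.sum_congr rfl fun j _ => ?_
  congr 1
  have h2 := InnerProductSpace.toDual_symm_apply (𝕜 := ℝ) (x := EuclideanSpace.single j 1) (y := L)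
  rw [← h2, EuclideanSpace.inner_single_right]
  simp

lemma apply_self_eq {n : ℕ} (L : EuclideanSpace ℝ (Fin n) →L[ℝ] ℝ) (y : EuclideanSpace ℝ (Fin n)) :
    L y = ∑ j, y j * L (EuclideanSpace.single j 1) := by
  conv_lhs => rw [← (EuclideanSpace.basisFun (Fin n) ℝ).sum_repr y]
  simp [map_sum]

/-- Coordinate-weighted identity: for each `i`,
`(1/4)∫ yᵢ |∇w|² ρ + (1/(4(p-1)))∫ yᵢ w² ρ - (1/(2(p+1)))∫ yᵢ |w|^{p+1} ρ = 0`. -/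
theorem coordinate_weighted_identity
    (n : ℕ) (p : ℝ) (hp : 1 < p) (w : EuclideanSpace ℝ (Fin n) → ℝ)
    (hsmooth : ContDiff ℝ (⊤ : ℕ∞) w)
    (hbd : ∃ M : ℝ, ∀ y, |w y| ≤ M ∧ ‖fderiv ℝ w y‖ ≤ M ∧
        ‖fderiv ℝ (fderiv ℝ w) y‖ ≤ M)
    (heq : ∀ y, lap w y - (1 / 2) * fderiv ℝ w y y - w y / (p - 1)
        + |w y| ^ (p - 1) * w y = 0)
    (hint1 : ∀ i : Fin n, Integrable (fun y => y i * ‖fderiv ℝ w y‖ ^ 2 * rho n y))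
    (hint2 : ∀ i : Fin n, Integrable (fun y => y i * (w y) ^ 2 * rho n y))
    (hint3 : ∀ i : Fin n, Integrable (fun y => y i * |w y| ^ (p + 1) * rho n y)) :
    ∀ i : Fin n,
      (1 / 4) * (∫ y, y i * ‖fderiv ℝ w y‖ ^ 2 * rho n y)
        + (1 / (4 * (p - 1))) * (∫ y, y i * (w y) ^ 2 * rho n y)
        - (1 / (2 * (p + 1))) * (∫ y, y i * |w y| ^ (p + 1) * rho n y) = 0 := by
  intro i
  obtain ⟨M, hM⟩ := hbd
  have h2top : (2 : WithTop ℕ∞) ≤ ((⊤ : ℕ∞) : WithTop ℕ∞) := by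
    have : ((2 : ℕ∞) : WithTop ℕ∞) ≤ ((⊤ : ℕ∞) : WithTop ℕ∞) := WithTop.coe_le_coe.2 le_top
    exact this
  have hw1 : ContDiff ℝ 1 (fderiv ℝ w) := (hsmooth.of_le h2top).fderiv_right (by norm_num)
  have hwd : Differentiable ℝ w := hsmooth.differentiable (by simp)
  have hw1d : Differentiable ℝ (fderiv ℝ w) := hw1.differentiable (by simp)
  have hw2c : Continuous (fderiv ℝ (fderiv ℝ w)) := hw1.continuous_fderiv (by simp)
  let e : Fin n → EuclideanSpace ℝ (Fin n) := fun j => EuclideanSpace.single j 1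
  have he : ∀ j, ‖e j‖ = 1 := fun j => by simp [e]
  let d : Fin n → EuclideanSpace ℝ (Fin n) → ℝ := fun j y => fderiv ℝ w y (e j)
  let dd : Fin n → Fin n → EuclideanSpace ℝ (Fin n) → ℝ :=
    fun j k y => fderiv ℝ (fderiv ℝ w) y (e k) (e j)
  have hwB : CBdd w := ⟨hwd.continuous, M, fun y => (hM y).1⟩
  have hdB : ∀ j, CBdd (d j) := fun j => by
    refine ⟨hw1.continuous.clm_apply continuous_const, M, fun y => ?_⟩
    have := (fderiv ℝ w y).le_opNorm (e j)
    rw [he, mul_one] at this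
    exact this.trans (hM y).2.1
  have hddB : ∀ j k, CBdd (dd j k) := fun j k => by
    refine ⟨(hw2c.clm_apply continuous_const).clm_apply continuous_const, M, fun y => ?_⟩
    have h1 := (fderiv ℝ (fderiv ℝ w) y (e k)).le_opNorm (e j)
    have h2 := (fderiv ℝ (fderiv ℝ w) y).le_opNorm (e k)
    rw [he, mul_one] at h1 h2
    exact (h1.trans h2).trans (hM y).2.2
  have hsym : ∀ j k y, dd j k y = dd k j y := fun j k y =>
    (hsmooth.contDiffAt.isSymmSndFDerivAt (by simpa using h2top)) (e k) (e j)
  have hdF : ∀ j y, HasFDerivAt (d j) ((fderiv ℝ (fderiv ℝ w) y).flip (e j)) y := fun j y => by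
    have := (hw1d y).hasFDerivAt.clm_apply (hasFDerivAt_const (e j) y)
    simpa using this
  have hlap : ∀ y, lap w y = ∑ j, dd j j y := fun y => by
    unfold lap
    refine Finset.sum_congr rfl fun j _ => ?_
    have := (hdF j y).fderiv
    change fderiv ℝ (d j) y (e j) = _
    rw [this]; rfl
  -- the potential
  let φ : ℝ → ℝ := fun t => -(1 / (2 * (p - 1))) * t ^ 2 + (1 / (p + 1)) * |t| ^ (p + 1)
  let φ' : ℝ → ℝ := fun t => -(1 / (p - 1)) * t + |t| ^ (p - 1) * t
  have hφd : ∀ t, HasDerivAt φ (φ' t) t := fun t => by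
    have h1 := ((hasDerivAt_pow 2 t).const_mul (-(1 / (2 * (p - 1))))).add
      ((hasDerivAt_abs_rpow t (p := p + 1) (by linarith)).const_mul (1 / (p + 1)))
    have : p - 1 ≠ 0 := by linarith
    have : p + 1 ≠ 0 := by linarith
    have e2 : p + 1 - 2 = p - 1 := by ring
    rw [e2] at h1
    refine HasDerivAt.congr_deriv (f := φ) h1 ?_
    change _ = -(1 / (p - 1)) * t + |t| ^ (p - 1) * t
    field_simp
    norm_num
    ring
  have hφc : Continuous φ := continuous_iff_continuousAt.2 fun t => (hφd t).continuousAt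
  have hφ'c : Continuous φ' := by
    have : Continuous fun t : ℝ => |t| ^ (p - 1) :=
      continuous_abs.rpow_const fun t => Or.inr (by linarith)
    fun_prop
  have hcB : ∀ c : ℝ, CBdd (fun _ : EuclideanSpace ℝ (Fin n) => c) :=
    fun c => ⟨continuous_const, |c|, fun _ => le_rfl⟩
  have A : ∀ j, _ := fun j => key j (G := fun y => d j y * d i y)
    (G' := fun y => dd j j y * d i y + d j y * dd i j y)
    ((hdB j).mul (hdB i)) (((hddB j j).mul (hdB i)).add ((hdB j).mul (hddB i j)))
    (fun y => by
      refine ⟨_, (hdF j y).mul (hdF i y), ?_⟩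
      change d j y * dd i j y + d i y * dd j j y = _
      ring)
  have Bk := key i (G := fun y => (∑ j, (-(1 / 2)) * (d j y * d j y)) + φ (w y))
    (G' := fun y => (∑ j, (-1) * (d j y * dd j i y)) + φ' (w y) * d i y)
    ((CBdd.sum fun j => (hcB (-(1 / 2))).mul
      ((hdB j).mul (hdB j))).add (hwB.comp hφc))
    ((CBdd.sum fun j => (hcB (-1)).mul
      ((hdB j).mul (hddB j i))).add ((hwB.comp hφ'c).mul (hdB i)))
    (fun y => by
      have h1 : HasFDerivAt (fun y => φ (w y)) (φ' (w y) • fderiv ℝ w y) y :=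
        (hφd (w y)).comp_hasFDerivAt y (hwd y).hasFDerivAt
      have h2 := HasFDerivAt.fun_sum (u := Finset.univ) fun j _ =>
        ((hdF j y).mul (hdF j y)).const_mul (-(1 / 2))
      refine ⟨_, h2.add h1, ?_⟩
      rw [add_apply, sum_apply]
      change _ + φ' (w y) * d i y = _
      congr 1
      refine Finset.sum_congr rfl fun j _ => ?_
      change -(1 / 2) * (d j y * dd j i y + d j y * dd j i y) = _
      ring)
  have hS : ∫ y, ((∑ j, (rho n y * (dd j j y * d i y + d j y * dd i j y)
        - (1 / 2) * (y j * rho n y) * (d j y * d i y)))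
      + (rho n y * ((∑ j, (-1) * (d j y * dd j i y)) + φ' (w y) * d i y)
        - (1 / 2) * (y i * rho n y) * ((∑ j, (-(1 / 2)) * (d j y * d j y)) + φ (w y)))) = 0 := by
    rw [integral_add (integrable_finsetSum _ fun j _ => (A j).1) Bk.1,
      integral_finsetSum _ fun j _ => (A j).1, Bk.2]
    simp only [(A _).2, Finset.sum_const_zero, add_zero]
  rw [← integral_const_mul, ← integral_const_mul, ← integral_const_mul,
    ← integral_add ((hint1 i).const_mul _) ((hint2 i).const_mul _),
    ← integral_sub ?_ ((hint3 i).const_mul _), ← hS]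
  swap
  · exact ((hint1 i).const_mul _).add ((hint2 i).const_mul _)
  congr 1
  funext y
  have q := heq y
  rw [hlap, apply_self_eq] at q
  have hn : ‖fderiv ℝ w y‖ ^ 2 = ∑ j, d j y * d j y := by
    rw [norm_sq_dual]; exact Finset.sum_congr rfl fun j _ => by simp only [d, e]; ring
  change (∑ j, dd j j y) - 1 / 2 * (∑ j, y j * d j y) - _ + _ = 0 at q
  have s1 : ∑ j, (rho n y * (dd j j y * d i y + d j y * dd i j y)
        - (1 / 2) * (y j * rho n y) * (d j y * d i y))
      = rho n y * d i y * (∑ j, dd j j y) + rho n y * (∑ j, d j y * dd j i y)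
        - 1 / 2 * rho n y * d i y * ∑ j, y j * d j y := by
    rw [Finset.mul_sum, Finset.mul_sum, Finset.mul_sum, ← Finset.sum_add_distrib,
      ← Finset.sum_sub_distrib]
    refine Finset.sum_congr rfl fun j _ => ?_
    rw [hsym i j]; ring
  rw [s1, hn, ← Finset.mul_sum, ← Finset.mul_sum]
  simp only [φ, φ']
  have hp1 : p - 1 ≠ 0 := by linarith
  have hp2 : p + 1 ≠ 0 := by linarith
  have c1 : 1 / (4 * (p - 1)) = 1 / 4 * (p - 1)⁻¹ := by field_simp
  have c2 : 1 / (2 * (p - 1)) = 1 / 2 * (p - 1)⁻¹ := by field_simp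
  have c3 : 1 / (2 * (p + 1)) = 1 / 2 * (p + 1)⁻¹ := by field_simp
  rw [div_eq_mul_inv] at q
  rw [c1, c2, c3, one_div (p - 1), one_div (p + 1)]
  linear_combination (-(rho n y * d i y)) * q
end

section
/- Let Θ(x,t) be the Giga–Kohn density of a backward self-similar solution u(x,t) = (-t)^{-1/(p-1)} w(x/√(-t)) centered at the space-time origin. If x₀ ∈ ℝ^n, t₀ ≤ 0, and Θ(x₀,t₀) = Θ(0,0), then for every real a and every (x,t) ∈ ℝ^n × (-∞,0), u(a x₀ + x, a² t₀ + t) = u(x,t); in particular u is invariant under translation by (x₀, t₀). -/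
open MeasureTheory Real Filter

/-- The backward heat kernel `G(y,t) = (-4πt)^{-n/2} e^{|y|²/(4t)}`. -/
noncomputable def bkernel (n : ℕ) (y : EuclideanSpace ℝ (Fin n)) (t : ℝ) : ℝ :=
  (-4 * Real.pi * t) ^ (-(n : ℝ) / 2) * Real.exp (‖y‖ ^ 2 / (4 * t))

/-- The Giga–Kohn monotone energy `E(s; x, T, u)`. -/
noncomputable def GKenergy (n : ℕ) (p : ℝ)
    (u : EuclideanSpace ℝ (Fin n) → ℝ → ℝ) (s : ℝ)
    (x : EuclideanSpace ℝ (Fin n)) (T : ℝ) : ℝ :=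
  (1 / 2) * (-s) ^ ((p + 1) / (p - 1)) *
      (∫ y, ‖fderiv ℝ (fun z => u z (T + s)) y‖ ^ 2 * bkernel n (y - x) s)
    - (1 / (p + 1)) * (-s) ^ ((p + 1) / (p - 1)) *
      (∫ y, |u y (T + s)| ^ (p + 1) * bkernel n (y - x) s)
    + (1 / (2 * (p - 1))) * (-s) ^ (2 / (p - 1)) *
      (∫ y, (u y (T + s)) ^ 2 * bkernel n (y - x) s)

noncomputable def pd {n : ℕ} (i : Fin n) (f : EuclideanSpace ℝ (Fin n) → ℝ)
    (y : EuclideanSpace ℝ (Fin n)) : ℝ := fderiv ℝ f y (EuclideanSpace.single i 1)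

noncomputable def Gs {n : ℕ} (κ : ℝ) (b : EuclideanSpace ℝ (Fin n))
    (y : EuclideanSpace ℝ (Fin n)) : ℝ := Real.exp (-κ * ‖y - b‖ ^ 2)

section helpers

variable {n : ℕ}

lemma pd_mul (i : Fin n) {f g : EuclideanSpace ℝ (Fin n) → ℝ} {y : EuclideanSpace ℝ (Fin n)}
    (hf : DifferentiableAt ℝ f y) (hg : DifferentiableAt ℝ g y) :
    pd i (fun z => f z * g z) y = pd i f y * g y + f y * pd i g y := by
  unfold pd
  rw [fderiv_fun_mul hf hg]
  simp
  ring

lemma pd_sub (i : Fin n) {f g : EuclideanSpace ℝ (Fin n) → ℝ} {y : EuclideanSpace ℝ (Fin n)}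
    (hf : DifferentiableAt ℝ f y) (hg : DifferentiableAt ℝ g y) :
    pd i (fun z => f z - g z) y = pd i f y - pd i g y := by
  unfold pd
  rw [fderiv_fun_sub hf hg]
  simp

lemma fderiv_eq_sum (f : EuclideanSpace ℝ (Fin n) → ℝ) (y v : EuclideanSpace ℝ (Fin n)) :
    fderiv ℝ f y v = ∑ i, v i * pd i f y := by
  unfold pd
  conv_lhs => rw [← (EuclideanSpace.basisFun (Fin n) ℝ).sum_repr v]
  simp [map_sum]

lemma norm_fderiv_sq (f : EuclideanSpace ℝ (Fin n) → ℝ) (y : EuclideanSpace ℝ (Fin n)) :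
    ‖fderiv ℝ f y‖ ^ 2 = ∑ i, pd i f y ^ 2 := by
  have h1 := (EuclideanSpace.basisFun (Fin n) ℝ).sum_sq_norm_inner_right
    ((InnerProductSpace.toDual ℝ (EuclideanSpace ℝ (Fin n))).symm (fderiv ℝ f y))
  rw [LinearIsometryEquiv.norm_map] at h1
  rw [← h1]
  refine Finset.sum_congr rfl fun i _ => ?_
  rw [real_inner_comm, InnerProductSpace.toDual_symm_apply]
  simp [pd]

lemma contDiff_pd (i : Fin n) {f : EuclideanSpace ℝ (Fin n) → ℝ}
    (hf : ContDiff ℝ (⊤ : ℕ∞) f) : ContDiff ℝ (⊤ : ℕ∞) (pd i f) := by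
  unfold pd
  have := hf.fderiv_right (m := ((⊤ : ℕ∞) : WithTop ℕ∞)) (by simp)
  exact this.clm_apply contDiff_const

lemma continuous_pd (i : Fin n) {f : EuclideanSpace ℝ (Fin n) → ℝ}
    (hf : ContDiff ℝ 1 f) : Continuous (pd i f) := by
  unfold pd
  exact (hf.continuous_fderiv (by simp)).clm_apply continuous_const

lemma contDiff_Gs (κ : ℝ) (b : EuclideanSpace ℝ (Fin n)) : ContDiff ℝ (⊤ : ℕ∞) (Gs κ b) := by
  unfold Gs
  exact (contDiff_const.mul ((contDiff_id.sub contDiff_const).norm_sq ℝ)).exp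

lemma Gs_pos (κ : ℝ) (b y : EuclideanSpace ℝ (Fin n)) : 0 < Gs κ b y := Real.exp_pos _

lemma pd_Gs (i : Fin n) (κ : ℝ) (b y : EuclideanSpace ℝ (Fin n)) :
    pd i (Gs κ b) y = -2 * κ * (y i - b i) * Gs κ b y := by
  have h1 : HasFDerivAt (fun z : EuclideanSpace ℝ (Fin n) => ‖z - b‖ ^ 2)
      (2 • (innerSL ℝ (y - b))) y := by
    have := (hasStrictFDerivAt_norm_sq (y - b)).hasFDerivAt.comp y ((hasFDerivAt_id y).sub_const b)
    simpa [Function.comp_def] using this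
  have h2 := (h1.const_mul (-κ)).exp
  unfold pd
  have h3 : fderiv ℝ (Gs κ b) y = _ := h2.fderiv
  rw [h3]
  simp [Gs, EuclideanSpace.inner_single_right]
  ring

lemma int_pd_zero (i : Fin n) {f : EuclideanSpace ℝ (Fin n) → ℝ} (hf : ContDiff ℝ 1 f)
    (hc : HasCompactSupport f) : ∫ y, pd i f y = 0 := by
  have h := integral_mul_fderiv_eq_neg_fderiv_mul_of_integrable (μ := volume) (f := fun _ => (1:ℝ))
    (g := f) (v := EuclideanSpace.single i (1:ℝ)) ?_ ?_ ?_ ?_ ?_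
  · simpa [pd] using h
  · simp
  · simp only [one_mul]
    exact (continuous_pd i hf).integrable_of_hasCompactSupport (hc.fderiv_apply ℝ _)
  · simp only [one_mul]
    exact hf.continuous.integrable_of_hasCompactSupport hc
  · fun_prop
  · exact fun x _ => (hf.differentiable (by simp)).differentiableAt

lemma exists_cutoff (n : ℕ) : ∃ C : ℝ, 0 ≤ C ∧ ∃ φ : ℕ → EuclideanSpace ℝ (Fin n) → ℝ, ∀ k : ℕ,
    ContDiff ℝ (⊤ : ℕ∞) (φ k) ∧ HasCompactSupport (φ k) ∧ (∀ y, 0 ≤ φ k y) ∧ (∀ y, φ k y ≤ 1) ∧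
    (∀ y, ‖y‖ ≤ k + 1 → φ k y = 1) ∧ ∀ i y, |pd i (φ k) y| ≤ C / (k + 1) := by
  let χ : ContDiffBump (0 : EuclideanSpace ℝ (Fin n)) := ⟨1, 2, by norm_num, by norm_num⟩
  have hχ : ContDiff ℝ (⊤ : ℕ∞) χ := χ.contDiff
  have hcs : HasCompactSupport χ := χ.hasCompactSupport
  obtain ⟨C, hC⟩ := (hcs.fderiv ℝ).exists_bound_of_continuous (hχ.continuous_fderiv (by simp))
  refine ⟨C, (norm_nonneg _).trans (hC 0), fun k y => χ (((k : ℝ) + 1)⁻¹ • y), fun k => ?_⟩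
  have hk : (0 : ℝ) < (k : ℝ) + 1 := by positivity
  refine ⟨hχ.comp (contDiff_const_smul _), ?_, fun y => χ.nonneg, fun y => χ.le_one, ?_, ?_⟩
  · exact hcs.comp_smul (inv_ne_zero hk.ne')
  · intro y hy
    apply χ.one_of_mem_closedBall
    simp only [Metric.mem_closedBall, dist_zero_right, norm_smul, norm_inv]
    rw [Real.norm_of_nonneg hk.le]
    change _ ≤ (1:ℝ)
    rw [inv_mul_le_iff₀ hk]; simpa using hy
  · intro i y
    have h1 : HasFDerivAt (fun y : EuclideanSpace ℝ (Fin n) => χ (((k : ℝ) + 1)⁻¹ • y))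
        ((fderiv ℝ χ (((k : ℝ) + 1)⁻¹ • y)).comp
          (((k : ℝ) + 1)⁻¹ • ContinuousLinearMap.id ℝ _)) y := by
      have ha : HasFDerivAt χ (fderiv ℝ χ (((k : ℝ) + 1)⁻¹ • y)) (((k : ℝ) + 1)⁻¹ • y) :=
        ((hχ.differentiable (by simp)).differentiableAt).hasFDerivAt
      exact ha.comp y (by exact (hasFDerivAt_id (𝕜 := ℝ) y).const_smul (((k : ℝ) + 1)⁻¹))
    unfold pd
    rw [h1.fderiv]
    simp only [ContinuousLinearMap.comp_apply, smul_apply,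
      ContinuousLinearMap.id_apply, map_smul, smul_eq_mul, abs_mul, abs_inv, abs_of_pos hk]
    rw [div_eq_inv_mul]
    gcongr
    have := (fderiv ℝ χ (((k : ℝ) + 1)⁻¹ • y)).le_opNorm (EuclideanSpace.single i 1)
    simp at this
    exact this.trans (hC _)

lemma div_zero_int {X : Fin n → EuclideanSpace ℝ (Fin n) → ℝ} (hX : ∀ i, ContDiff ℝ 1 (X i))
    (hi : ∀ i, Integrable (X i)) (hd : Integrable (fun y => ∑ i, pd i (X i) y)) :
    ∫ y, ∑ i, pd i (X i) y = 0 := by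
  obtain ⟨C, hC, φ, hφ⟩ := exists_cutoff n
  have hφc : ∀ k, Continuous (φ k) := fun k => (hφ k).1.continuous
  have hφ1 : ∀ k, ContDiff ℝ 1 (φ k) := fun k => (hφ k).1.of_le (by simp)
  have key : ∀ k, ∫ y, φ k y * ∑ i, pd i (X i) y = - ∫ y, ∑ i, X i y * pd i (φ k) y := by
    intro k
    have h0 : ∫ y, ∑ i, pd i (fun z => φ k z * X i z) y = 0 := by
      rw [integral_finsetSum]
      · exact Finset.sum_eq_zero fun i _ => int_pd_zero i ((hφ1 k).mul (hX i))
          ((hφ k).2.1.mul_right)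
      · intro i _
        exact (continuous_pd i ((hφ1 k).mul (hX i))).integrable_of_hasCompactSupport
          (((hφ k).2.1.mul_right).fderiv_apply ℝ _)
    have h1 : ∀ y, ∑ i, pd i (fun z => φ k z * X i z) y
        = φ k y * ∑ i, pd i (X i) y + ∑ i, X i y * pd i (φ k) y := by
      intro y
      rw [Finset.mul_sum, ← Finset.sum_add_distrib]
      refine Finset.sum_congr rfl fun i _ => ?_
      rw [pd_mul i ((hφ1 k).differentiable (by simp)).differentiableAt
        ((hX i).differentiable (by simp)).differentiableAt]
      ring
    simp_rw [h1] at h0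
    rw [integral_add] at h0
    · linarith
    · refine Continuous.integrable_of_hasCompactSupport ?_ ((hφ k).2.1.mul_right)
      exact (hφc k).mul (continuous_finsetSum _ fun i _ => continuous_pd i (hX i))
    · refine integrable_finsetSum _ fun i _ => ?_
      refine Continuous.integrable_of_hasCompactSupport ?_ 
        (((hφ k).2.1.fderiv_apply ℝ _).mul_left)
      exact ((hX i).continuous).mul (continuous_pd i (hφ1 k))
  have lim1 : Tendsto (fun k => ∫ y, φ k y * ∑ i, pd i (X i) y) atTop
      (nhds (∫ y, ∑ i, pd i (X i) y)) := by
    refine tendsto_integral_of_dominated_convergence (fun y => ‖∑ i, pd i (X i) y‖) ?_ hd.norm ?_ ?_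
    · exact fun k => (hφc k).aestronglyMeasurable.mul hd.1
    · refine fun k => Eventually.of_forall fun y => ?_
      rw [norm_mul]
      refine mul_le_of_le_one_left (norm_nonneg _) ?_
      rw [Real.norm_of_nonneg ((hφ k).2.2.1 y)]
      exact (hφ k).2.2.2.1 y
    · refine Eventually.of_forall fun y => ?_
      refine tendsto_const_nhds.congr' ?_
      obtain ⟨N, hN⟩ := exists_nat_ge ‖y‖
      filter_upwards [eventually_ge_atTop N] with k hk
      rw [(hφ k).2.2.2.2.1 y, one_mul]
      have : (N : ℝ) ≤ k := by exact_mod_cast hk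
      linarith
  have lim2 : Tendsto (fun k => - ∫ y, ∑ i, X i y * pd i (φ k) y) atTop (nhds 0) := by
    have hb : Tendsto (fun k : ℕ => (C / ((k : ℝ) + 1)) * ∫ y, ∑ i, |X i y|) atTop (nhds 0) := by
      have h := (tendsto_one_div_add_atTop_nhds_zero_nat (𝕜 := ℝ)).const_mul
        (C * ∫ y, ∑ i, |X i y|)
      rw [mul_zero] at h
      refine h.congr fun k => ?_
      ring
    refine squeeze_zero_norm (fun k => ?_) hb
    rw [norm_neg, ← integral_const_mul]
    refine norm_integral_le_of_norm_le ?_ (Eventually.of_forall fun y => ?_)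
    · exact (integrable_finsetSum _ fun i _ => (hi i).abs).const_mul _
    · refine (norm_sum_le _ _).trans ?_
      rw [Finset.mul_sum]
      refine Finset.sum_le_sum fun i _ => ?_
      rw [norm_mul, mul_comm]
      simp only [Real.norm_eq_abs]
      gcongr
      exact (hφ k).2.2.2.2.2 i y
  simp_rw [key] at lim1
  exact tendsto_nhds_unique lim1 lim2

lemma int_Gs {κ : ℝ} (hκ : 0 < κ) (b : EuclideanSpace ℝ (Fin n)) :
    ∫ y, Gs κ b y = (π / κ) ^ ((n : ℝ) / 2) := by
  unfold Gs
  rw [integral_sub_right_eq_self (fun y : EuclideanSpace ℝ (Fin n) => Real.exp (-κ * ‖y‖ ^ 2)) b]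
  rw [GaussianFourier.integral_rexp_neg_mul_sq_norm hκ]
  simp

lemma integrable_Gs {κ : ℝ} (hκ : 0 < κ) (b : EuclideanSpace ℝ (Fin n)) :
    Integrable (Gs κ b) := by
  by_contra h
  have h1 := int_Gs hκ b
  rw [integral_undef h] at h1
  have : 0 < (π / κ) ^ ((n : ℝ) / 2) := by positivity
  linarith

lemma sq_mul_Gs_le {κ : ℝ} (hκ : 0 < κ) (b y : EuclideanSpace ℝ (Fin n)) :
    ‖y - b‖ ^ 2 * Gs κ b y ≤ (2 / κ) * Gs (κ / 2) b y := by
  have h1 : κ / 2 * ‖y - b‖ ^ 2 ≤ Real.exp (κ / 2 * ‖y - b‖ ^ 2) := by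
    linarith [Real.add_one_le_exp (κ / 2 * ‖y - b‖ ^ 2)]
  have h2 : Gs (κ / 2) b y = Real.exp (κ / 2 * ‖y - b‖ ^ 2) * Gs κ b y := by
    unfold Gs; rw [← Real.exp_add]; ring_nf
  rw [h2, ← mul_assoc]
  refine mul_le_mul_of_nonneg_right ?_ (Gs_pos _ _ _).le
  calc ‖y - b‖ ^ 2 = (2 / κ) * (κ / 2 * ‖y - b‖ ^ 2) := by field_simp
    _ ≤ _ := by gcongr

end helpers

section cacc
variable {n : ℕ}

lemma cacc_pointwise {w φ f : EuclideanSpace ℝ (Fin n) → ℝ} {M Mf C : ℝ}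
    (hw : ContDiff ℝ (⊤ : ℕ∞) w) (hφ : ContDiff ℝ (⊤ : ℕ∞) φ)
    (hφ0 : ∀ y, 0 ≤ φ y) (hφ1 : ∀ y, φ y ≤ 1) (hC : ∀ i y, |pd i φ y| ≤ C)
    (hM : ∀ y, |w y| ≤ M) (hf : ∀ y, |f y| ≤ Mf)
    (heq : ∀ y, ∑ i, pd i (pd i w) y = f y + (1 / 2) * ∑ i, y i * pd i w y)
    (κ : ℝ) (b y : EuclideanSpace ℝ (Fin n)) :
    φ y ^ 2 * ((∑ i, pd i w y ^ 2) * Gs κ b y) ≤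
      2 * (∑ i, pd i (fun z => (φ z * φ z) * (Gs κ b z * (w z * pd i w z))) y)
      + (2 * M * Mf + 8 * n * M ^ 2 * C ^ 2 + M ^ 2 * ‖b‖ ^ 2) * Gs κ b y
      + 4 * M ^ 2 * (1 / 2 - 2 * κ) ^ 2 * (‖y - b‖ ^ 2 * Gs κ b y) := by
  have dφ : DifferentiableAt ℝ φ y := (hφ.differentiable (by simp)).differentiableAt
  have dw : DifferentiableAt ℝ w y := (hw.differentiable (by simp)).differentiableAt
  have dG : DifferentiableAt ℝ (Gs κ b) y :=
    ((contDiff_Gs κ b).differentiable (by simp)).differentiableAt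
  have dp : ∀ i, DifferentiableAt ℝ (pd i w) y := fun i =>
    ((contDiff_pd i hw).differentiable (by simp)).differentiableAt
  have hdiv : ∀ i, pd i (fun z => (φ z * φ z) * (Gs κ b z * (w z * pd i w z))) y
      = Gs κ b y * (φ y ^ 2 * pd i w y ^ 2 + φ y ^ 2 * w y * pd i (pd i w) y
        + φ y * w y * pd i w y * (2 * pd i φ y - 2 * κ * (y i - b i) * φ y)) := by
    intro i
    rw [pd_mul i (dφ.fun_mul dφ) (dG.fun_mul (dw.fun_mul (dp i))), pd_mul i dφ dφ,
      pd_mul i dG (dw.fun_mul (dp i)), pd_mul i dw (dp i), pd_Gs]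
    ring
  have hn1 : ‖b‖ ^ 2 = ∑ i, b i ^ 2 := by simp [EuclideanSpace.norm_sq_eq]
  have hn2 : ‖y - b‖ ^ 2 = ∑ i, (y i - b i) ^ 2 := by simp [EuclideanSpace.norm_sq_eq]
  have hG := Gs_pos κ b y
  have hM0 : 0 ≤ M := (abs_nonneg _).trans (hM y)
  have hw2 : w y ^ 2 ≤ M ^ 2 := by
    rw [← sq_abs]; exact pow_le_pow_left₀ (abs_nonneg _) (hM y) 2
  have hφ2 : φ y ^ 2 ≤ 1 := by nlinarith [hφ0 y, hφ1 y]
  have hsum : ∑ i, pd i (fun z => (φ z * φ z) * (Gs κ b z * (w z * pd i w z))) y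
     = Gs κ b y * (φ y ^ 2 * w y * f y + ∑ i, (φ y ^ 2 * pd i w y ^ 2
        + φ y * w y * pd i w y * (2 * pd i φ y + (y i / 2 - 2 * κ * (y i - b i)) * φ y))) := by
    simp_rw [hdiv]
    rw [← Finset.mul_sum]
    congr 1
    have : ∑ i, φ y ^ 2 * w y * pd i (pd i w) y
        = φ y ^ 2 * w y * f y + ∑ i, φ y ^ 2 * w y * (1 / 2) * (y i * pd i w y) := by
      rw [← Finset.mul_sum, heq, ← Finset.mul_sum]; ring
    simp_rw [Finset.sum_add_distrib]
    rw [this]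
    have h2 : ∑ i, φ y * w y * pd i w y * (2 * pd i φ y + (y i / 2 - 2 * κ * (y i - b i)) * φ y)
      = ∑ i, φ y ^ 2 * w y * (1 / 2) * (y i * pd i w y)
        + ∑ i, φ y * w y * pd i w y * (2 * pd i φ y - 2 * κ * (y i - b i) * φ y) := by
      rw [← Finset.sum_add_distrib]
      exact Finset.sum_congr rfl fun i _ => by ring
    rw [h2]; ring
  have hterm : ∀ i, -(2 * (φ y ^ 2 * pd i w y ^ 2
        + φ y * w y * pd i w y * (2 * pd i φ y + (y i / 2 - 2 * κ * (y i - b i)) * φ y)))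
      ≤ - (φ y ^ 2 * pd i w y ^ 2) + 8 * M ^ 2 * C ^ 2 + M ^ 2 * b i ^ 2
        + 4 * M ^ 2 * (1 / 2 - 2 * κ) ^ 2 * (y i - b i) ^ 2 := by
    intro i
    have hc2 : pd i φ y ^ 2 ≤ C ^ 2 := by
      rw [← sq_abs]; exact pow_le_pow_left₀ (abs_nonneg _) (hC i y) 2
    set V := y i / 2 - 2 * κ * (y i - b i) with hV
    set Q := 2 * pd i φ y + V * φ y
    have hQ : Q ^ 2 ≤ 8 * C ^ 2 + 2 * V ^ 2 := by
      have h1 : Q ^ 2 ≤ 2 * (2 * pd i φ y) ^ 2 + 2 * (V * φ y) ^ 2 := by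
        nlinarith [sq_nonneg (2 * pd i φ y - V * φ y)]
      have h2 : (V * φ y) ^ 2 ≤ V ^ 2 := by
        rw [mul_pow]; exact mul_le_of_le_one_right (sq_nonneg _) hφ2
      nlinarith
    have hV2 : V ^ 2 ≤ b i ^ 2 / 2 + 2 * (1 / 2 - 2 * κ) ^ 2 * (y i - b i) ^ 2 := by
      have : V = (1 / 2 - 2 * κ) * (y i - b i) + b i / 2 := by rw [hV]; ring
      rw [this]
      nlinarith [sq_nonneg ((1 / 2 - 2 * κ) * (y i - b i) - b i / 2)]
    have hQ2 : Q ^ 2 ≤ 8 * C ^ 2 + b i ^ 2 + 4 * (1 / 2 - 2 * κ) ^ 2 * (y i - b i) ^ 2 := by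
      nlinarith
    have h3 : w y ^ 2 * Q ^ 2 ≤ M ^ 2 * (8 * C ^ 2 + b i ^ 2
        + 4 * (1 / 2 - 2 * κ) ^ 2 * (y i - b i) ^ 2) :=
      mul_le_mul hw2 hQ2 (sq_nonneg _) (sq_nonneg _)
    have h4 := sq_nonneg (φ y * pd i w y + w y * Q)
    have h5 : (φ y * pd i w y + w y * Q) ^ 2 = φ y ^ 2 * pd i w y ^ 2
        + 2 * (φ y * w y * pd i w y * Q) + w y ^ 2 * Q ^ 2 := by ring
    linarith
  have hS := Finset.sum_le_sum fun i (_ : i ∈ Finset.univ) => hterm i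
  rw [Finset.sum_neg_distrib, ← Finset.mul_sum] at hS
  simp only [Finset.sum_add_distrib, Finset.sum_neg_distrib, ← Finset.mul_sum] at hS
  rw [hsum, hn1, hn2]
  simp only [Finset.sum_add_distrib, ← Finset.mul_sum]
  simp only [Finset.sum_const, Finset.card_univ, Fintype.card_fin, nsmul_eq_mul] at hS
  have hwf : -(φ y ^ 2 * w y * f y) ≤ M * Mf := by
    have h1 : |φ y ^ 2 * w y * f y| ≤ M * Mf := by
      rw [abs_mul, abs_mul, abs_of_nonneg (sq_nonneg _)]
      refine mul_le_mul ?_ (hf y) (abs_nonneg _) hM0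
      exact (mul_le_of_le_one_left (abs_nonneg _) hφ2).trans (hM y)
    linarith [neg_abs_le (φ y ^ 2 * w y * f y)]
  have hfin := mul_le_mul_of_nonneg_right (add_le_add hS (mul_le_mul_of_nonneg_left hwf (zero_le_two))) hG.le
  linarith

lemma cacc {w f : EuclideanSpace ℝ (Fin n) → ℝ} {M Mf : ℝ}
    (hw : ContDiff ℝ (⊤ : ℕ∞) w) 
    (hM : ∀ y, |w y| ≤ M) (hf : ∀ y, |f y| ≤ Mf)
    (heq : ∀ y, ∑ i, pd i (pd i w) y = f y + (1 / 2) * ∑ i, y i * pd i w y) :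
    ∃ K : ℝ, ∀ κ : ℝ, 0 < κ → ∀ b : EuclideanSpace ℝ (Fin n),
    Integrable (fun y => (∑ i, pd i w y ^ 2) * Gs κ b y) ∧
    ∫ y, (∑ i, pd i w y ^ 2) * Gs κ b y ≤ (K + M ^ 2 * ‖b‖ ^ 2) * (π / κ) ^ ((n : ℝ) / 2)
      + 4 * M ^ 2 * (1 / 2 - 2 * κ) ^ 2 * ((2 / κ) * (π / (κ / 2)) ^ ((n : ℝ) / 2)) := by
  obtain ⟨C, hC, φ, hφ⟩ := exists_cutoff n
  refine ⟨2 * M * Mf + 8 * n * M ^ 2 * C ^ 2, fun κ hκ b => ?_⟩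
  set B := (2 * M * Mf + 8 * n * M ^ 2 * C ^ 2 + M ^ 2 * ‖b‖ ^ 2) * (π / κ) ^ ((n : ℝ) / 2)
      + 4 * M ^ 2 * (1 / 2 - 2 * κ) ^ 2 * ((2 / κ) * (π / (κ / 2)) ^ ((n : ℝ) / 2)) with hB
  have hcont : Continuous (fun y => (∑ i, pd i w y ^ 2) * Gs κ b y) :=
    (continuous_finsetSum _ fun i _ => (contDiff_pd i hw).continuous.pow 2).mul
      (contDiff_Gs κ b).continuous
  have hnn : ∀ y, 0 ≤ (∑ i, pd i w y ^ 2) * Gs κ b y := fun y =>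
    mul_nonneg (Finset.sum_nonneg fun i _ => sq_nonneg _) (Gs_pos _ _ _).le
  have hcov : AECover (volume : Measure (EuclideanSpace ℝ (Fin n))) atTop
      (fun k : ℕ => Metric.closedBall (0 : EuclideanSpace ℝ (Fin n)) ((k : ℝ) + 1)) :=
    aecover_closedBall (tendsto_atTop_add_const_right _ _ tendsto_natCast_atTop_atTop)
  have hbd : ∀ k : ℕ, ∫ y in Metric.closedBall (0 : EuclideanSpace ℝ (Fin n)) ((k : ℝ) + 1),
      (∑ i, pd i w y ^ 2) * Gs κ b y ≤ B := by
    intro k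
    obtain ⟨h1, h2, h3, h4, h5, h6⟩ := hφ k
    have h6' : ∀ i y, |pd i (φ k) y| ≤ C := fun i y => (h6 i y).trans
      (div_le_self hC (by linarith [(Nat.cast_nonneg k : (0:ℝ) ≤ k)]))
    have hXc : ∀ i, ContDiff ℝ 1 (fun z => (φ k z * φ k z) * (Gs κ b z * (w z * pd i w z))) :=
      fun i => ((h1.mul h1).mul ((contDiff_Gs κ b).mul (hw.mul (contDiff_pd i hw)))).of_le (by simp)
    have hXs : ∀ i, HasCompactSupport
        (fun z => (φ k z * φ k z) * (Gs κ b z * (w z * pd i w z))) :=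
      fun i => (h2.mul_right).mul_right
    have hXi : ∀ i, Integrable 
        (pd i (fun z => (φ k z * φ k z) * (Gs κ b z * (w z * pd i w z)))) := fun i =>
      (continuous_pd i (hXc i)).integrable_of_hasCompactSupport ((hXs i).fderiv_apply ℝ _)
    have hInteg : Integrable (fun y => φ k y ^ 2 * ((∑ i, pd i w y ^ 2) * Gs κ b y)) := by
      refine Continuous.integrable_of_hasCompactSupport ((h1.continuous.pow 2).mul hcont) ?_
      have : HasCompactSupport (fun y => φ k y ^ 2) := by
        simp_rw [sq]; exact h2.mul_right
      exact this.mul_right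
    have hs1 : ∫ y in Metric.closedBall (0 : EuclideanSpace ℝ (Fin n)) ((k : ℝ) + 1),
        (∑ i, pd i w y ^ 2) * Gs κ b y
        ≤ ∫ y, φ k y ^ 2 * ((∑ i, pd i w y ^ 2) * Gs κ b y) := by
      rw [setIntegral_congr_fun (g := fun y => φ k y ^ 2 * ((∑ i, pd i w y ^ 2) * Gs κ b y))
        Metric.isClosed_closedBall.measurableSet]
      · exact setIntegral_le_integral hInteg (Eventually.of_forall fun y =>
          mul_nonneg (sq_nonneg _) (hnn y))
      · intro y hy
        have : φ k y = 1 := h5 y (by simpa using hy)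
        simp [this]
    refine hs1.trans ?_
    have iG := integrable_Gs hκ b
    have iG2 := integrable_Gs (half_pos hκ) b
    have idiv : Integrable (fun y => 2 * (∑ i, pd i (fun z => (φ k z * φ k z) *
        (Gs κ b z * (w z * pd i w z))) y)) :=
      (integrable_finsetSum _ fun i _ => hXi i).const_mul 2
    have i2 := iG.const_mul (2 * M * Mf + 8 * n * M ^ 2 * C ^ 2 + M ^ 2 * ‖b‖ ^ 2)
    have i3 := (iG2.const_mul (2 / κ)).const_mul (4 * M ^ 2 * (1 / 2 - 2 * κ) ^ 2)
    calc _ ≤ ∫ y, (2 * (∑ i, pd i (fun z => (φ k z * φ k z) * (Gs κ b z * (w z * pd i w z))) y)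
          + (2 * M * Mf + 8 * n * M ^ 2 * C ^ 2 + M ^ 2 * ‖b‖ ^ 2) * Gs κ b y
          + 4 * M ^ 2 * (1 / 2 - 2 * κ) ^ 2 * ((2 / κ) * Gs (κ / 2) b y)) := by
          refine integral_mono hInteg ((idiv.add i2).add i3) fun y => ?_
          refine (cacc_pointwise hw h1 h3 h4 h6' hM hf heq κ b y).trans ?_
          have := mul_le_mul_of_nonneg_left (sq_mul_Gs_le hκ b y)
            (by positivity : 0 ≤ 4 * M ^ 2 * (1 / 2 - 2 * κ) ^ 2)
          linarith
      _ = B := by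
          have e1 := integral_add (idiv.add i2) i3
          have e2 := integral_add idiv i2
          simp only [Pi.add_apply] at e1 e2
          rw [e1, e2]
          simp only [integral_const_mul]
          rw [integral_finsetSum _ (fun i _ => hXi i),
            Finset.sum_eq_zero (fun i _ => int_pd_zero i (hXc i) (hXs i)),
            int_Gs hκ, int_Gs (half_pos hκ), hB]
          ring
  have hI : Integrable (fun y => (∑ i, pd i w y ^ 2) * Gs κ b y) := by
    refine hcov.integrable_of_integral_bounded_of_nonneg_ae B ?_ (Eventually.of_forall hnn)
      (Eventually.of_forall hbd)
    intro k
    exact hcont.continuousOn.integrableOn_compact (isCompact_closedBall _ _)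
  exact ⟨hI, le_of_tendsto (hcov.integral_tendsto_of_countably_generated hI)
    (Eventually.of_forall hbd)⟩

end cacc


noncomputable def Ecal (n : ℕ) (p : ℝ) (w : EuclideanSpace ℝ (Fin n) → ℝ) (κ : ℝ)
    (b : EuclideanSpace ℝ (Fin n)) : ℝ :=
  (κ / π) ^ ((n : ℝ) / 2) * (
    (1 / 2) * (4 * κ) ^ (-((p + 1) / (p - 1))) * (∫ y, (∑ i, pd i w y ^ 2) * Gs κ b y)
    - (1 / (p + 1)) * (4 * κ) ^ (-((p + 1) / (p - 1))) * (∫ y, |w y| ^ (p + 1) * Gs κ b y)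
    + (1 / (2 * (p - 1))) * (4 * κ) ^ (-(2 / (p - 1))) * (∫ y, w y ^ 2 * Gs κ b y))

section energy
variable {n : ℕ}

lemma change_var {q m : ℝ} (hq : 0 < q) (hm : 0 < m) (g : EuclideanSpace ℝ (Fin n) → ℝ)
    (x₀ : EuclideanSpace ℝ (Fin n)) :
    ∫ y, g ((m ^ (-(1 / 2) : ℝ)) • y) * bkernel n (y - x₀) (-q)
      = (m / (4 * q) / π) ^ ((n : ℝ) / 2) *
        ∫ z, g z * Gs (m / (4 * q)) ((m ^ (-(1 / 2) : ℝ)) • x₀) z := by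
  set r : ℝ := m ^ (-(1 / 2) : ℝ) with hr
  have hr0 : 0 < r := by positivity
  have hr2 : r ^ 2 = m⁻¹ := by
    rw [hr, ← Real.rpow_natCast, ← Real.rpow_mul hm.le, ← Real.rpow_neg_one]; norm_num
  have h1 : ∀ y : EuclideanSpace ℝ (Fin n), g (r • y) * bkernel n (y - x₀) (-q)
      = (4 * π * q) ^ (-(n : ℝ) / 2) * (fun z => g z * Gs (m / (4 * q)) (r • x₀) z) (r • y) := by
    intro y
    have : bkernel n (y - x₀) (-q)
        = (4 * π * q) ^ (-(n : ℝ) / 2) * Gs (m / (4 * q)) (r • x₀) (r • y) := by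
      unfold bkernel Gs
      rw [← smul_sub, norm_smul, mul_pow, Real.norm_eq_abs, sq_abs, hr2]
      congr 2
      · ring
      · field_simp
    rw [this]; ring
  simp_rw [h1]
  have hcs := Measure.integral_comp_smul volume
    (fun z => g z * Gs (m / (4 * q)) (r • x₀) z) r
  beta_reduce at hcs
  rw [integral_const_mul, hcs]
  rw [smul_eq_mul, ← mul_assoc]
  congr 1
  rw [finrank_euclideanSpace_fin, abs_of_nonneg (by positivity), hr, ← Real.rpow_natCast,
    ← Real.rpow_mul hm.le, ← Real.rpow_neg hm.le]
  rw [show -(n : ℝ) / 2 = -((n : ℝ) / 2) by ring, Real.rpow_neg (by positivity),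
    ← Real.inv_rpow (by positivity), show -(-(1 / 2) * (n : ℝ)) = (n : ℝ) / 2 by ring,
    ← Real.mul_rpow (by positivity) hm.le]
  congr 1
  field_simp

lemma energy_eq {p : ℝ} (hp : 1 < p) {w : EuclideanSpace ℝ (Fin n) → ℝ}
    (hw : ContDiff ℝ (⊤ : ℕ∞) w)
    {u : EuclideanSpace ℝ (Fin n) → ℝ → ℝ}
    (hu : ∀ (x : EuclideanSpace ℝ (Fin n)) (t : ℝ), t < 0 →
        u x t = (-t) ^ (-(1 / (p - 1))) * w (((-t) ^ (-(1 / 2) : ℝ)) • x))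
    (x₀ : EuclideanSpace ℝ (Fin n)) {q m : ℝ} (hq : 0 < q) (hm : 0 < m) {t₀ : ℝ}
    (ht : t₀ + -q = -m) :
    GKenergy n p u (-q) x₀ t₀ = Ecal n p w (m / (4 * q)) ((m ^ (-(1 / 2) : ℝ)) • x₀) := by
  have hp1 : p - 1 ≠ 0 := by linarith
  set c : ℝ := m ^ (-(1 / (p - 1))) with hc
  have hc0 : 0 < c := by positivity
  have hut : ∀ z, u z (-m) = c * w ((m ^ (-(1 / 2) : ℝ)) • z) := by
    intro z
    rw [hu z (-m) (by linarith), neg_neg]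
  have hfd : ∀ y, ‖fderiv ℝ (fun z => u z (-m)) y‖ ^ 2
      = m ^ (-((p + 1) / (p - 1))) *
        (fun z => ∑ i, pd i w z ^ 2) ((m ^ (-(1 / 2) : ℝ)) • y) := by
    intro y
    simp only [hut]
    set r : ℝ := m ^ (-(1 / 2) : ℝ) with hr
    have ha : HasFDerivAt w (fderiv ℝ w (r • y)) (r • y) :=
        ((hw.differentiable (by simp)).differentiableAt).hasFDerivAt
    have hb : HasFDerivAt (fun z : EuclideanSpace ℝ (Fin n) => r • z)
      (r • ContinuousLinearMap.id ℝ _) y := (hasFDerivAt_id (𝕜 := ℝ) y).const_smul r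
    have h1 := ((ha.comp y hb).const_mul c).fderiv
    simp only [Function.comp_def] at h1
    rw [h1, ContinuousLinearMap.comp_smul, ContinuousLinearMap.comp_id, norm_smul, norm_smul,
      mul_pow, mul_pow, norm_fderiv_sq, ← mul_assoc]
    congr 1
    simp only [Real.norm_eq_abs, sq_abs]
    rw [hc, hr, ← Real.rpow_natCast, ← Real.rpow_natCast, ← Real.rpow_mul hm.le,
      ← Real.rpow_mul hm.le, ← Real.rpow_add hm]
    congr 1
    field_simp
    push_cast
    ring
  have hpw : ∀ y, |u y (-m)| ^ (p + 1) = m ^ (-((p + 1) / (p - 1))) *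
        (fun z => |w z| ^ (p + 1)) ((m ^ (-(1 / 2) : ℝ)) • y) := by
    intro y
    rw [hut, abs_mul, Real.mul_rpow (abs_nonneg _) (abs_nonneg _), abs_of_pos hc0, hc,
      ← Real.rpow_mul hm.le]
    congr 2
    field_simp
  have hsq : ∀ y, u y (-m) ^ 2 = m ^ (-(2 / (p - 1))) *
        (fun z => w z ^ 2) ((m ^ (-(1 / 2) : ℝ)) • y) := by
    intro y
    rw [hut, mul_pow, hc, ← Real.rpow_natCast (m ^ (-(1 / (p - 1)))), ← Real.rpow_mul hm.le]
    congr 2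
    push_cast
    field_simp
  unfold GKenergy Ecal
  rw [ht]
  have hgen : ∀ (F g : EuclideanSpace ℝ (Fin n) → ℝ) (a : ℝ),
      (∀ y, F y = a * g ((m ^ (-(1 / 2) : ℝ)) • y)) →
      ∫ y, F y * bkernel n (y - x₀) (-q) = a * ((m / (4 * q) / π) ^ ((n : ℝ) / 2) *
        ∫ z, g z * Gs (m / (4 * q)) ((m ^ (-(1 / 2) : ℝ)) • x₀) z) := by
    intro F g a hF
    rw [← change_var hq hm, ← integral_const_mul]
    refine integral_congr_ae (Eventually.of_forall fun y => ?_)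
    simp only [hF y]; ring
  rw [hgen _ (fun z => ∑ i, pd i w z ^ 2) _ hfd, hgen _ (fun z => |w z| ^ (p + 1)) _ hpw,
    hgen _ (fun z => w z ^ 2) _ hsq]
  have h4 : 4 * (m / (4 * q)) = m / q := by field_simp
  have hpow : ∀ a : ℝ, (m / q) ^ (-a) = q ^ a * m ^ (-a) := by
    intro a
    rw [Real.div_rpow hm.le hq.le, Real.rpow_neg hq.le a]
    field_simp
  rw [h4, hpow, hpow, neg_neg]
  ring

lemma Gs_integrable_of_bdd {g : EuclideanSpace ℝ (Fin n) → ℝ} (hg : Continuous g) {B : ℝ}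
    (hB : ∀ y, |g y| ≤ B) {κ : ℝ} (hκ : 0 < κ) (b : EuclideanSpace ℝ (Fin n)) :
    Integrable (fun y => g y * Gs κ b y) :=
  (integrable_Gs hκ b).bdd_mul hg.aestronglyMeasurable (Eventually.of_forall hB)

end energy


section noether
variable {n : ℕ}

lemma pd_comm (i j : Fin n) {w : EuclideanSpace ℝ (Fin n) → ℝ} (hw : ContDiff ℝ (⊤ : ℕ∞) w)
    (y : EuclideanSpace ℝ (Fin n)) : pd i (pd j w) y = pd j (pd i w) y := by
  have hd : DifferentiableAt ℝ (fderiv ℝ w) y :=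
    ((hw.fderiv_right (m := ((⊤ : ℕ∞) : WithTop ℕ∞)) (by simp)).differentiable (by simp)).differentiableAt
  have h1 : ∀ i j : Fin n, pd i (pd j w) y
      = fderiv ℝ (fderiv ℝ w) y (EuclideanSpace.single i 1) (EuclideanSpace.single j 1) := by
    intro i j
    unfold pd
    rw [fderiv_clm_apply hd (differentiableAt_const _)]
    simp
  rw [h1, h1]
  have h2 : (2 : WithTop ℕ∞) ≤ ((⊤ : ℕ∞) : WithTop ℕ∞) := by
    exact WithTop.coe_le_coe.2 (le_top : (2 : ℕ∞) ≤ ⊤)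
  exact (hw.contDiffAt.isSymmSndFDerivAt (by simpa using h2)) _ _

lemma pd_sum_const (i : Fin n) {g : Fin n → EuclideanSpace ℝ (Fin n) → ℝ}
    {y : EuclideanSpace ℝ (Fin n)} (hg : ∀ j, DifferentiableAt ℝ (g j) y) (e : Fin n → ℝ) :
    pd i (fun z => ∑ j, e j * g j z) y = ∑ j, e j * pd i (g j) y := by
  unfold pd
  rw [fderiv_fun_sum (fun j _ => (hg j).const_mul (e j))]
  simp only [_root_.sum_apply]
  refine Finset.sum_congr rfl fun j _ => ?_
  rw [fderiv_const_mul (hg j)]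
  simp

noncomputable def hdens (n : ℕ) (p : ℝ) (w : EuclideanSpace ℝ (Fin n) → ℝ)
    (y : EuclideanSpace ℝ (Fin n)) : ℝ :=
  (∑ j, (1 / 2) * (pd j w y * pd j w y)) - (1 / (p + 1)) * |w y| ^ (p + 1)
    + (1 / (2 * (p - 1))) * (w y * w y)

lemma hdens_contDiff {p : ℝ} (hp : 1 < p) {w : EuclideanSpace ℝ (Fin n) → ℝ}
    (hw : ContDiff ℝ (⊤ : ℕ∞) w) : ContDiff ℝ 1 (hdens n p w) := by
  have hw1 : ContDiff ℝ 1 w := hw.of_le (by simp)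
  have hp1 : ∀ j, ContDiff ℝ 1 (pd j w) := fun j => (contDiff_pd j hw).of_le (by simp)
  unfold hdens
  refine ContDiff.add (ContDiff.sub ?_ ?_) ?_
  · exact ContDiff.sum fun j _ => contDiff_const.mul ((hp1 j).mul (hp1 j))
  · exact contDiff_const.mul (hw1.norm_rpow (by linarith))
  · exact contDiff_const.mul (hw1.mul hw1)

lemma pd_hdens {p : ℝ} (hp : 1 < p) {w : EuclideanSpace ℝ (Fin n) → ℝ}
    (hw : ContDiff ℝ (⊤ : ℕ∞) w) (i : Fin n) (y : EuclideanSpace ℝ (Fin n)) :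
    pd i (hdens n p w) y = (∑ j, pd j w y * pd i (pd j w) y)
      + (w y / (p - 1) - |w y| ^ (p - 1) * w y) * pd i w y := by
  have dw : DifferentiableAt ℝ w y := (hw.differentiable (by simp)).differentiableAt
  have dp : ∀ j, DifferentiableAt ℝ (pd j w) y := fun j =>
    ((contDiff_pd j hw).differentiable (by simp)).differentiableAt
  have hsum := pd_sum_const i (g := fun j z => pd j w z * pd j w z)
    (fun j => (dp j).fun_mul (dp j)) (fun _ => 1 / 2)
  have hr : HasFDerivAt (fun z => |w z| ^ (p + 1))
      (((p + 1) * |w y| ^ (p + 1 - 2) * w y) • fderiv ℝ w y) y :=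
    (hasDerivAt_abs_rpow (w y) (by linarith : 1 < p + 1)).comp_hasFDerivAt y dw.hasFDerivAt
  have dsum : DifferentiableAt ℝ (fun z => ∑ j, (1 / 2 : ℝ) * (pd j w z * pd j w z)) y :=
    DifferentiableAt.fun_sum fun j _ => ((dp j).fun_mul (dp j)).const_mul _
  have h1 : HasFDerivAt (hdens n p w) (fderiv ℝ (fun z => ∑ j, (1 / 2 : ℝ) * (pd j w z * pd j w z)) y
      - (1 / (p + 1)) • (((p + 1) * |w y| ^ (p + 1 - 2) * w y) • fderiv ℝ w y)
      + (1 / (2 * (p - 1))) • (w y • fderiv ℝ w y + w y • fderiv ℝ w y)) y :=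
    (dsum.hasFDerivAt.sub (hr.const_mul _)).add
      ((dw.hasFDerivAt.mul dw.hasFDerivAt).const_mul _)
  have h2 : pd i (hdens n p w) y = pd i (fun z => ∑ j, (1 / 2 : ℝ) * (pd j w z * pd j w z)) y
      - (1 / (p + 1)) * (((p + 1) * |w y| ^ (p + 1 - 2) * w y) * pd i w y)
      + (1 / (2 * (p - 1))) * (w y * pd i w y + w y * pd i w y) := by
    conv_lhs => unfold pd
    rw [h1.fderiv]
    simp [pd]
    ring
  rw [h2, hsum, show p + 1 - 2 = p - 1 by ring]
  have h3 : ∑ j, (1 / 2 : ℝ) * pd i (fun z => pd j w z * pd j w z) y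
      = ∑ j, pd j w y * pd i (pd j w) y := by
    refine Finset.sum_congr rfl fun j _ => ?_
    rw [pd_mul i (dp j) (dp j)]; ring
  rw [h3]
  have hp1 : p - 1 ≠ 0 := by linarith
  have hp2 : p + 1 ≠ 0 := by linarith
  field_simp
  ring

/-- The vector field of the Noether identity. -/
noncomputable def Xfield (n : ℕ) (p : ℝ) (w : EuclideanSpace ℝ (Fin n) → ℝ) (τ : ℝ)
    (e : EuclideanSpace ℝ (Fin n)) (i : Fin n) (z : EuclideanSpace ℝ (Fin n)) : ℝ :=
  Gs (1 / 4) (τ • e) z * (e i * hdens n p w z - (∑ j, e j * pd j w z) * pd i w z)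

lemma Xfield_div {p : ℝ} (hp : 1 < p) {w : EuclideanSpace ℝ (Fin n) → ℝ}
    (hw : ContDiff ℝ (⊤ : ℕ∞) w)
    (heq : ∀ y, ∑ i, pd i (pd i w) y = (w y / (p - 1) - |w y| ^ (p - 1) * w y)
      + (1 / 2) * ∑ i, y i * pd i w y)
    (τ : ℝ) (e y : EuclideanSpace ℝ (Fin n)) :
    ∑ i, pd i (Xfield n p w τ e i) y =
      - (hdens n p w y * ((1 / 2) * (∑ i, e i * (y i - τ * e i)) * Gs (1 / 4) (τ • e) y))
      - (τ / 2) * ((∑ j, e j * pd j w y) ^ 2 * Gs (1 / 4) (τ • e) y) := by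
  have dw : DifferentiableAt ℝ w y := (hw.differentiable (by simp)).differentiableAt
  have dp : ∀ j, DifferentiableAt ℝ (pd j w) y := fun j =>
    ((contDiff_pd j hw).differentiable (by simp)).differentiableAt
  have dG : DifferentiableAt ℝ (Gs (1 / 4) (τ • e)) y :=
    ((contDiff_Gs _ _).differentiable (by simp)).differentiableAt
  have dh : DifferentiableAt ℝ (hdens n p w) y :=
    ((hdens_contDiff hp hw).differentiable (by simp)).differentiableAt
  have dD : DifferentiableAt ℝ (fun z => ∑ j, e j * pd j w z) y :=
    DifferentiableAt.fun_sum fun j _ => (dp j).const_mul _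
  have hce : ∀ i, pd i (fun z => e i * hdens n p w z) y = e i * pd i (hdens n p w) y := by
    intro i; unfold pd; rw [fderiv_const_mul dh]; simp
  set f := w y / (p - 1) - |w y| ^ (p - 1) * w y with hf
  set D := ∑ j, e j * pd j w y with hD
  set G := Gs (1 / 4) (τ • e) y with hG
  set h := hdens n p w y with hh
  have h1 : ∀ i, pd i (Xfield n p w τ e i) y =
      (-(1 / 2) * h * G) * (e i * (y i - τ * e i)) + ((1 / 2) * D * G) * (y i * pd i w y)
      - (τ / 2 * D * G) * (e i * pd i w y)
      + G * (∑ j, e i * (pd j w y * pd i (pd j w) y)) + (G * f) * (e i * pd i w y)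
      - G * (∑ j, e j * (pd i w y * pd i (pd j w) y)) - (G * D) * pd i (pd i w) y := by
    intro i
    unfold Xfield
    rw [pd_mul i dG ((dh.const_mul _).fun_sub (dD.fun_mul (dp i))), pd_Gs,
      pd_sub i (dh.const_mul _) (dD.fun_mul (dp i)), pd_mul i dD (dp i), hce,
      pd_sum_const i dp, pd_hdens hp hw]
    have : ∑ j, e j * (pd i w y * pd i (pd j w) y) = (∑ j, e j * pd i (pd j w) y) * pd i w y := by
      rw [Finset.sum_mul]; exact Finset.sum_congr rfl fun j _ => by ring
    rw [this, ← Finset.mul_sum, ← hf, ← hD, ← hG, ← hh]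
    simp only [PiLp.smul_apply, smul_eq_mul]
    ring
  simp_rw [h1]
  simp only [Finset.sum_add_distrib, Finset.sum_sub_distrib]
  rw [← Finset.mul_sum, ← Finset.mul_sum, ← Finset.mul_sum, ← Finset.mul_sum, ← Finset.mul_sum,
    ← Finset.mul_sum, ← Finset.mul_sum, heq y, ← hf, ← hD]
  have hsw : ∑ i, ∑ j, e i * (pd j w y * pd i (pd j w) y)
      = ∑ i, ∑ j, e j * (pd i w y * pd i (pd j w) y) := by
    rw [Finset.sum_comm]
    refine Finset.sum_congr rfl fun i _ => Finset.sum_congr rfl fun j _ => ?_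
    rw [pd_comm j i hw]
  rw [hsw]
  ring

end noether


section fin
variable {n : ℕ}

lemma cont_abs_rpow {w : EuclideanSpace ℝ (Fin n) → ℝ} (hw : Continuous w) {a : ℝ} (ha : 0 ≤ a) :
    Continuous (fun y => |w y| ^ a) :=
  hw.abs.rpow_const fun _ => Or.inr ha

lemma abs_rpow_bdd {w : EuclideanSpace ℝ (Fin n) → ℝ} {M : ℝ} (hM : ∀ y, |w y| ≤ M) {a : ℝ}
    (ha : 0 ≤ a) (y : EuclideanSpace ℝ (Fin n)) : |(|w y| ^ a)| ≤ M ^ a := by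
  rw [abs_of_nonneg (by positivity)]
  exact Real.rpow_le_rpow (abs_nonneg _) (hM y) ha

lemma sq_bdd {w : EuclideanSpace ℝ (Fin n) → ℝ} {M : ℝ} (hM : ∀ y, |w y| ≤ M)
    (y : EuclideanSpace ℝ (Fin n)) : |w y ^ 2| ≤ M ^ 2 := by
  rw [abs_pow]; exact pow_le_pow_left₀ (abs_nonneg _) (hM y) 2

lemma hdens_int {p : ℝ} (hp : 1 < p) {w : EuclideanSpace ℝ (Fin n) → ℝ} {M : ℝ}
    (hw : ContDiff ℝ (⊤ : ℕ∞) w) (hM : ∀ y, |w y| ≤ M) {κ : ℝ} (hκ : 0 < κ)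
    (b : EuclideanSpace ℝ (Fin n))
    (hS : Integrable (fun y => (∑ i, pd i w y ^ 2) * Gs κ b y)) :
    Integrable (fun y => hdens n p w y * Gs κ b y) ∧
    ∫ y, hdens n p w y * Gs κ b y = (1 / 2) * (∫ y, (∑ i, pd i w y ^ 2) * Gs κ b y)
      - (1 / (p + 1)) * (∫ y, |w y| ^ (p + 1) * Gs κ b y)
      + (1 / (2 * (p - 1))) * (∫ y, w y ^ 2 * Gs κ b y) := by
  have h0 : (fun y => hdens n p w y * Gs κ b y) = fun y =>
      (1 / 2) * ((∑ i, pd i w y ^ 2) * Gs κ b y) - (1 / (p + 1)) * (|w y| ^ (p + 1) * Gs κ b y)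
        + (1 / (2 * (p - 1))) * (w y ^ 2 * Gs κ b y) := by
    funext y
    unfold hdens
    rw [← Finset.mul_sum]
    simp_rw [← sq]
    ring
  have i1 := hS.const_mul (1 / 2)
  have i2 := (Gs_integrable_of_bdd (cont_abs_rpow hw.continuous (by linarith : 0 ≤ p + 1))
    (abs_rpow_bdd hM (by linarith : 0 ≤ p + 1)) hκ b).const_mul (1 / (p + 1))
  have i3 := (Gs_integrable_of_bdd (g := fun y => w y ^ 2) (hw.continuous.pow 2) (sq_bdd hM) hκ b).const_mul
    (1 / (2 * (p - 1)))
  constructor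
  · rw [h0]; exact (i1.sub i2).add i3
  · rw [h0]
    have e1 := integral_add (i1.sub i2) i3
    have e2 := integral_sub i1 i2
    simp only [Pi.sub_apply] at e1 e2
    rw [e1, e2]
    simp only [integral_const_mul]

lemma Ecal_quarter {p : ℝ} (hp : 1 < p) {w : EuclideanSpace ℝ (Fin n) → ℝ} {M : ℝ}
    (hw : ContDiff ℝ (⊤ : ℕ∞) w) (hM : ∀ y, |w y| ≤ M) 
    (b : EuclideanSpace ℝ (Fin n))
    (hS : Integrable (fun y => (∑ i, pd i w y ^ 2) * Gs (1 / 4) b y)) :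
    Ecal n p w (1 / 4) b
      = (1 / 4 / π) ^ ((n : ℝ) / 2) * ∫ y, hdens n p w y * Gs (1 / 4) b y := by
  rw [(hdens_int hp hw hM (by norm_num) b hS).2]
  unfold Ecal
  norm_num

/-- `r e^{-r²/4} ≤ 4 e^{-r²/8}` -/
lemma norm_mul_Gs_le (b y : EuclideanSpace ℝ (Fin n)) :
    ‖y - b‖ * Gs (1 / 4) b y ≤ 4 * Gs (1 / 8) b y := by
  have h2 : Gs (1 / 8) b y = Real.exp (1 / 8 * ‖y - b‖ ^ 2) * Gs (1 / 4) b y := by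
    unfold Gs; rw [← Real.exp_add]; ring_nf
  rw [h2, ← mul_assoc]
  refine mul_le_mul_of_nonneg_right ?_ (Gs_pos _ _ _).le
  nlinarith [Real.add_one_le_exp (1 / 8 * ‖y - b‖ ^ 2), sq_nonneg (‖y - b‖ - 1)]

lemma Gs_shift_le (b y : EuclideanSpace ℝ (Fin n)) :
    Gs (1 / 8) b y ≤ Real.exp (‖b‖ ^ 2 / 8) * Gs (1 / 16) 0 y := by
  unfold Gs
  rw [← Real.exp_add, Real.exp_le_exp, sub_zero]
  have h1 : ‖y‖ ≤ ‖y - b‖ + ‖b‖ := by simpa using norm_add_le (y - b) b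
  have h2 : ‖y‖ ^ 2 ≤ (‖y - b‖ + ‖b‖) ^ 2 := pow_le_pow_left₀ (norm_nonneg _) h1 2
  nlinarith [sq_nonneg (‖y - b‖ - ‖b‖)]

lemma hasDerivAt_Gs (e y : EuclideanSpace ℝ (Fin n)) (τ : ℝ) :
    HasDerivAt (fun τ : ℝ => Gs (1 / 4) (τ • e) y)
      ((1 / 2) * (∑ i, e i * (y i - τ * e i)) * Gs (1 / 4) (τ • e) y) τ := by
  have h0 : ∀ τ : ℝ, Gs (1 / 4) (τ • e) y = Real.exp (-(1 / 4) * ∑ i, (y i - τ * e i) ^ 2) := by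
    intro τ; simp [Gs, EuclideanSpace.norm_sq_eq]
  have h1 : HasDerivAt (fun τ : ℝ => ∑ i, (y i - τ * e i) ^ 2)
      (∑ i, (2 : ℕ) * (y i - τ * e i) ^ (2 - 1) * (-(1 * e i))) τ :=
    HasDerivAt.fun_sum fun i _ => (((hasDerivAt_id τ).mul_const (e i)).const_sub (y i)).pow 2
  have h2 := (h1.const_mul (-(1 / 4))).exp
  simp_rw [← h0] at h2
  convert h2 using 1
  rw [Finset.mul_sum, Finset.mul_sum, Finset.mul_sum, Finset.sum_mul]
  refine Finset.sum_congr rfl fun i _ => ?_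
  push_cast
  ring

lemma ip_le (e y : EuclideanSpace ℝ (Fin n)) (τ : ℝ) :
    |∑ i, e i * (y i - τ * e i)| ≤ ‖e‖ * ‖y - τ • e‖ := by
  have h := abs_real_inner_le_norm (y - τ • e) e
  rw [PiLp.inner_apply] at h
  simp at h
  rw [mul_comm ‖e‖]
  exact h

lemma D_sq_le (w : EuclideanSpace ℝ (Fin n) → ℝ) (e y : EuclideanSpace ℝ (Fin n)) :
    (∑ j, e j * pd j w y) ^ 2 ≤ ‖e‖ ^ 2 * ∑ i, pd i w y ^ 2 := by
  have h := Finset.sum_mul_sq_le_sq_mul_sq Finset.univ (fun j => e j) (fun j => pd j w y)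
  simpa [EuclideanSpace.norm_sq_eq] using h

lemma F_deriv {p : ℝ} (hp : 1 < p) {w : EuclideanSpace ℝ (Fin n) → ℝ} {M : ℝ}
    (hw : ContDiff ℝ (⊤ : ℕ∞) w) (hM : ∀ y, |w y| ≤ M)
    (hS : ∀ κ : ℝ, 0 < κ → ∀ b, Integrable (fun y => (∑ i, pd i w y ^ 2) * Gs κ b y))
    (heq : ∀ y, ∑ i, pd i (pd i w) y = (w y / (p - 1) - |w y| ^ (p - 1) * w y)
      + (1 / 2) * ∑ i, y i * pd i w y)
    (e : EuclideanSpace ℝ (Fin n)) (τ : ℝ) :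
    Integrable (fun y => (∑ j, e j * pd j w y) ^ 2 * Gs (1 / 4) (τ • e) y) ∧
    HasDerivAt (fun τ : ℝ => ∫ y, hdens n p w y * Gs (1 / 4) (τ • e) y)
      (-(τ / 2) * ∫ y, (∑ j, e j * pd j w y) ^ 2 * Gs (1 / 4) (τ • e) y) τ := by
  have hh : ∀ κ : ℝ, 0 < κ → ∀ b, Integrable (fun y => hdens n p w y * Gs κ b y) :=
    fun κ hκ b => (hdens_int hp hw hM hκ b (hS κ hκ b)).1
  have hcpd : ∀ j, Continuous (pd j w) := fun j => (contDiff_pd j hw).continuous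
  have hhc : Continuous (hdens n p w) := (hdens_contDiff hp hw).continuous
  have hGc : ∀ κ b, Continuous (Gs (n := n) κ b) := fun κ b => (contDiff_Gs κ b).continuous
  have hDc : Continuous (fun y => ∑ j, e j * pd j w y) :=
    continuous_finsetSum _ fun j _ => continuous_const.mul (hcpd j)
  have hq : (0 : ℝ) < 1 / 4 := by norm_num
  have iD : Integrable (fun y => (∑ j, e j * pd j w y) ^ 2 * Gs (1 / 4) (τ • e) y) := by
    refine ((hS _ hq (τ • e)).const_mul (‖e‖ ^ 2)).mono'
      ((hDc.pow 2).mul (hGc _ _)).aestronglyMeasurable (Eventually.of_forall fun y => ?_)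
    rw [Real.norm_of_nonneg (mul_nonneg (sq_nonneg _) (Gs_pos _ _ _).le), ← mul_assoc]
    exact mul_le_mul_of_nonneg_right (D_sq_le w e y) (Gs_pos _ _ _).le
  refine ⟨iD, ?_⟩
  have hder := hasDerivAt_integral_of_dominated_loc_of_deriv_le (μ := volume) (x₀ := τ)
    (F := fun (τ : ℝ) (y : EuclideanSpace ℝ (Fin n)) => hdens n p w y * Gs (1 / 4) (τ • e) y)
    (F' := fun τ y => hdens n p w y *
      ((1 / 2) * (∑ i, e i * (y i - τ * e i)) * Gs (1 / 4) (τ • e) y))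
    (bound := fun y => (2 * ‖e‖ * Real.exp ((|τ| + 1) ^ 2 * ‖e‖ ^ 2 / 8)) *
      |hdens n p w y * Gs (1 / 16) 0 y|)
    (Metric.ball_mem_nhds τ one_pos)
    (Eventually.of_forall fun t => (hhc.mul (hGc _ _)).aestronglyMeasurable)
    (hh _ hq _)
    ?_ ?_ ((hh _ (by norm_num) _).abs.const_mul _)
    (Eventually.of_forall fun y t _ => (hasDerivAt_Gs e y t).const_mul _)
  rotate_left
  · refine Continuous.aestronglyMeasurable ?_
    refine hhc.mul ((continuous_const.mul ?_).mul (hGc _ _))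
    fun_prop
  · refine Eventually.of_forall fun y t ht => ?_
    have ht' : |t| ≤ |τ| + 1 := by
      rw [Metric.mem_ball, Real.dist_eq] at ht
      have : |t| ≤ |t - τ| + |τ| := by simpa using abs_add_le (t - τ) τ
      linarith
    have hb : ‖t • e‖ ^ 2 ≤ (|τ| + 1) ^ 2 * ‖e‖ ^ 2 := by
      rw [norm_smul, mul_pow, Real.norm_eq_abs]
      gcongr
    rw [norm_mul, abs_mul, abs_of_pos (Gs_pos _ _ _), norm_mul, norm_mul]
    simp only [Real.norm_eq_abs]
    rw [abs_of_pos (Gs_pos _ _ _), abs_of_pos (by norm_num : (0 : ℝ) < 1 / 2)]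
    have h1 := norm_mul_Gs_le (t • e) y
    have h2 := Gs_shift_le (t • e) y
    have h3 : Real.exp (‖t • e‖ ^ 2 / 8) ≤ Real.exp ((|τ| + 1) ^ 2 * ‖e‖ ^ 2 / 8) := by
      rw [Real.exp_le_exp]; linarith
    have h4 : 1 / 2 * |∑ i, e i * (y i - t * e i)| * Gs (1 / 4) (t • e) y
        ≤ 2 * ‖e‖ * Real.exp ((|τ| + 1) ^ 2 * ‖e‖ ^ 2 / 8) * Gs (1 / 16) 0 y := by
      calc _ ≤ 1 / 2 * (‖e‖ * ‖y - t • e‖) * Gs (1 / 4) (t • e) y := by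
            have := Gs_pos (1 / 4) (t • e) y
            gcongr
            exact ip_le e y t
        _ = 1 / 2 * ‖e‖ * (‖y - t • e‖ * Gs (1 / 4) (t • e) y) := by ring
        _ ≤ 1 / 2 * ‖e‖ * (4 * (Real.exp ((|τ| + 1) ^ 2 * ‖e‖ ^ 2 / 8) * Gs (1 / 16) 0 y)) := by
            refine mul_le_mul_of_nonneg_left (h1.trans ?_) (by positivity)
            refine mul_le_mul_of_nonneg_left (h2.trans ?_) (by norm_num)
            exact mul_le_mul_of_nonneg_right h3 (Gs_pos _ _ _).le
        _ = _ := by ring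
    calc _ ≤ |hdens n p w y| * (2 * ‖e‖ * Real.exp ((|τ| + 1) ^ 2 * ‖e‖ ^ 2 / 8)
          * Gs (1 / 16) 0 y) := mul_le_mul_of_nonneg_left h4 (abs_nonneg _)
      _ = _ := by ring
  obtain ⟨hi, hder⟩ := hder
  have iX : ∀ i, Integrable (Xfield n p w τ e i) := by
    intro i
    refine (((hh _ hq (τ • e)).abs.const_mul |e i|).add
      ((hS _ hq (τ • e)).const_mul ((‖e‖ ^ 2 + 1) / 2))).mono' ?_ (Eventually.of_forall fun y => ?_)
    · exact ((hGc _ _).mul ((continuous_const.mul hhc).sub (hDc.mul (hcpd i)))).aestronglyMeasurable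
    · have hG := Gs_pos (1 / 4) (τ • e) y
      have h1 := D_sq_le w e y
      have h2 : pd i w y ^ 2 ≤ ∑ i, pd i w y ^ 2 :=
        Finset.single_le_sum (f := fun i => pd i w y ^ 2) (fun i _ => sq_nonneg _)
          (Finset.mem_univ i)
      have h3 : |(∑ j, e j * pd j w y) * pd i w y| ≤ (‖e‖ ^ 2 + 1) / 2 * ∑ i, pd i w y ^ 2 := by
        rw [abs_le]
        constructor
        · nlinarith [sq_nonneg ((∑ j, e j * pd j w y) + pd i w y)]
        · nlinarith [sq_nonneg ((∑ j, e j * pd j w y) - pd i w y)]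
      have h4 : |e i * hdens n p w y - (∑ j, e j * pd j w y) * pd i w y|
          ≤ |e i| * |hdens n p w y| + (‖e‖ ^ 2 + 1) / 2 * ∑ i, pd i w y ^ 2 := by
        refine (abs_sub _ _).trans ?_
        rw [abs_mul (e i)]
        linarith
      unfold Xfield
      simp only [Pi.add_apply]
      rw [norm_mul, Real.norm_eq_abs, Real.norm_eq_abs, abs_of_pos hG, abs_mul (hdens n p w y),
        abs_of_pos hG]
      have := mul_le_mul_of_nonneg_left h4 hG.le
      linarith
  have hXc : ∀ i, ContDiff ℝ 1 (Xfield n p w τ e i) := by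
    intro i
    have hp1 : ∀ j, ContDiff ℝ 1 (pd j w) := fun j => (contDiff_pd j hw).of_le (by simp)
    exact ((contDiff_Gs _ _).of_le (by simp)).mul ((contDiff_const.mul (hdens_contDiff hp hw)).sub
      ((ContDiff.sum fun j _ => contDiff_const.mul (hp1 j)).mul (hp1 i)))
  have hdiv := fun y => Xfield_div hp hw heq τ e y
  have idiv : Integrable (fun y => ∑ i, pd i (Xfield n p w τ e i) y) := by
    simp_rw [hdiv]
    exact hi.neg.sub (iD.const_mul _)
  have hz := div_zero_int hXc iX idiv
  simp_rw [hdiv] at hz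
  have e1 := integral_sub hi.neg (iD.const_mul (τ / 2))
  simp only [Pi.neg_apply] at e1
  rw [e1, integral_neg, integral_const_mul] at hz
  have hval : -(τ / 2) * ∫ y, (∑ j, e j * pd j w y) ^ 2 * Gs (1 / 4) (τ • e) y
      = ∫ y, hdens n p w y * ((1 / 2) * (∑ i, e i * (y i - τ * e i)) * Gs (1 / 4) (τ • e) y) := by
    linarith
  rw [hval]
  exact hder

end fin


section fin2
variable {n : ℕ}

lemma virial {p : ℝ} (hp : 1 < p) {w : EuclideanSpace ℝ (Fin n) → ℝ} {M : ℝ}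
    (hw : ContDiff ℝ (⊤ : ℕ∞) w) (hM : ∀ y, |w y| ≤ M)
    (hS : Integrable (fun y => (∑ i, pd i w y ^ 2) * Gs (1 / 4) 0 y))
    (heq : ∀ y, ∑ i, pd i (pd i w) y = (w y / (p - 1) - |w y| ^ (p - 1) * w y)
      + (1 / 2) * ∑ i, y i * pd i w y) :
    (∫ y, (∑ i, pd i w y ^ 2) * Gs (1 / 4) 0 y) + (1 / (p - 1)) * ∫ y, w y ^ 2 * Gs (1 / 4) 0 y
      = ∫ y, |w y| ^ (p + 1) * Gs (1 / 4) 0 y := by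
  have hcpd : ∀ j, Continuous (pd j w) := fun j => (contDiff_pd j hw).continuous
  have hGc : Continuous (Gs (n := n) (1 / 4) 0) := (contDiff_Gs _ _).continuous
  have hq : (0 : ℝ) < 1 / 4 := by norm_num
  have i2 := (Gs_integrable_of_bdd (cont_abs_rpow hw.continuous (by linarith : 0 ≤ p + 1))
    (abs_rpow_bdd hM (by linarith : 0 ≤ p + 1)) hq 0)
  have i3 := (Gs_integrable_of_bdd (g := fun y => w y ^ 2) (hw.continuous.pow 2) (sq_bdd hM) hq 0)
  have hX : ∀ i : Fin n, ContDiff ℝ 1 (fun z => Gs (1 / 4) 0 z * (w z * pd i w z)) := fun i =>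
    ((contDiff_Gs _ _).mul (hw.mul (contDiff_pd i hw))).of_le (by simp)
  have iX : ∀ i : Fin n, Integrable (fun z => Gs (1 / 4) 0 z * (w z * pd i w z)) := by
    intro i
    refine (i3.add hS).mono' (hX i).continuous.aestronglyMeasurable
      (Eventually.of_forall fun y => ?_)
    have hG := Gs_pos (1 / 4) 0 y
    have h2 : pd i w y ^ 2 ≤ ∑ i, pd i w y ^ 2 :=
      Finset.single_le_sum (f := fun i => pd i w y ^ 2) (fun i _ => sq_nonneg _)
        (Finset.mem_univ i)
    have h3 : |w y * pd i w y| ≤ w y ^ 2 + ∑ i, pd i w y ^ 2 := by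
      rw [abs_le]
      constructor
      · nlinarith [sq_nonneg (w y + pd i w y)]
      · nlinarith [sq_nonneg (w y - pd i w y)]
    rw [norm_mul, Real.norm_eq_abs, Real.norm_eq_abs, abs_of_pos hG]
    simp only [Pi.add_apply]
    nlinarith [mul_le_mul_of_nonneg_left h3 hG.le]
  have hdiv : ∀ y, ∑ i, pd i (fun z => Gs (1 / 4) 0 z * (w z * pd i w z)) y
      = (∑ i, pd i w y ^ 2) * Gs (1 / 4) 0 y + (1 / (p - 1)) * (w y ^ 2 * Gs (1 / 4) 0 y)
        - |w y| ^ (p + 1) * Gs (1 / 4) 0 y := by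
    intro y
    have dw : DifferentiableAt ℝ w y := (hw.differentiable (by simp)).differentiableAt
    have dp : ∀ j, DifferentiableAt ℝ (pd j w) y := fun j =>
      ((contDiff_pd j hw).differentiable (by simp)).differentiableAt
    have dG : DifferentiableAt ℝ (Gs (1 / 4) 0) y :=
      ((contDiff_Gs _ _).differentiable (by simp)).differentiableAt
    have h1 : ∀ i, pd i (fun z => Gs (1 / 4) 0 z * (w z * pd i w z)) y
        = Gs (1 / 4) 0 y * pd i w y ^ 2 + (Gs (1 / 4) 0 y * w y) * pd i (pd i w) y
          - ((1 / 2) * Gs (1 / 4) 0 y * w y) * (y i * pd i w y) := by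
      intro i
      rw [pd_mul i dG (dw.fun_mul (dp i)), pd_mul i dw (dp i), pd_Gs]
      simp only [PiLp.zero_apply]
      ring
    simp_rw [h1]
    simp only [Finset.sum_add_distrib, Finset.sum_sub_distrib]
    rw [← Finset.mul_sum, ← Finset.mul_sum, ← Finset.mul_sum, heq y]
    have h2 : |w y| ^ (p + 1) = |w y| ^ (p - 1) * (w y * w y) := by
      rcases eq_or_ne (w y) 0 with h | h
      · rw [h]; simp; exact Real.zero_rpow (by linarith)
      · rw [show p + 1 = (p - 1) + 2 by ring, Real.rpow_add (abs_pos.2 h), Real.rpow_two, sq_abs,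
          sq]
    rw [h2]
    ring
  have idiv : Integrable (fun y => ∑ i, pd i (fun z => Gs (1 / 4) 0 z * (w z * pd i w z)) y) := by
    simp_rw [hdiv]
    exact (hS.add (i3.const_mul _)).sub i2
  have hz := div_zero_int hX iX idiv
  simp_rw [hdiv] at hz
  have e1 := integral_sub (hS.add (i3.const_mul (1 / (p - 1)))) i2
  have e2 := integral_add hS (i3.const_mul (1 / (p - 1)))
  simp only [Pi.add_apply] at e1 e2
  rw [e1, e2, integral_const_mul] at hz
  linarith

lemma eq_zero_of_int_Gs {g : EuclideanSpace ℝ (Fin n) → ℝ} (hg : Continuous g)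
    (h0 : ∀ y, 0 ≤ g y) {κ : ℝ} {b : EuclideanSpace ℝ (Fin n)}
    (hi : Integrable (fun y => g y * Gs κ b y)) (hz : ∫ y, g y * Gs κ b y = 0) (y) : g y = 0 := by
  rw [integral_eq_zero_iff_of_nonneg (fun y => mul_nonneg (h0 y) (Gs_pos _ _ _).le) hi] at hz
  have hc : Continuous (fun y => g y * Gs κ b y) := hg.mul (contDiff_Gs _ _).continuous
  have := congrFun ((Continuous.ae_eq_iff_eq volume hc continuous_zero).1 hz) y
  simpa [(Gs_pos κ b y).ne'] using this

lemma Ecal_bound {p : ℝ} (hp : 1 < p) {w f : EuclideanSpace ℝ (Fin n) → ℝ} {M Mf : ℝ}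
    (hw : ContDiff ℝ (⊤ : ℕ∞) w) 
    (hM : ∀ y, |w y| ≤ M) (hf : ∀ y, |f y| ≤ Mf)
    (heq : ∀ y, ∑ i, pd i (pd i w) y = f y + (1 / 2) * ∑ i, y i * pd i w y) (B : ℝ) :
    ∃ K0 K1 K2 : ℝ, ∀ κ : ℝ, 1 ≤ κ → ∀ b : EuclideanSpace ℝ (Fin n), ‖b‖ ^ 2 ≤ B →
      Ecal n p w κ b ≤ K0 * (4 * κ) ^ (-((p + 1) / (p - 1)))
        + K1 * (4 * κ) ^ (1 - (p + 1) / (p - 1)) + K2 * (4 * κ) ^ (-(2 / (p - 1))) := by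
  obtain ⟨K, hK⟩ := cacc hw hM hf heq
  refine ⟨(1 / 2) * (K + M ^ 2 * B), (1 / 2) * (8 * M ^ 2 * 2 ^ ((n : ℝ) / 2)),
    (1 / (2 * (p - 1))) * M ^ 2, fun κ hκ b hb => ?_⟩
  have hκ0 : 0 < κ := by linarith
  obtain ⟨-, hA⟩ := hK κ hκ0 b
  set N := (κ / π) ^ ((n : ℝ) / 2) with hN
  have hN0 : 0 < N := by positivity
  have hN1 : N * (π / κ) ^ ((n : ℝ) / 2) = 1 := by
    rw [hN, ← Real.mul_rpow (by positivity) (by positivity)]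
    have : κ / π * (π / κ) = 1 := by field_simp
    rw [this, Real.one_rpow]
  have hN2 : N * (π / (κ / 2)) ^ ((n : ℝ) / 2) = 2 ^ ((n : ℝ) / 2) := by
    rw [hN, ← Real.mul_rpow (by positivity) (by positivity)]
    congr 1; field_simp
  have i3 := (Gs_integrable_of_bdd (g := fun y => w y ^ 2) (hw.continuous.pow 2) (sq_bdd hM) hκ0 b)
  have hCb : ∫ y, w y ^ 2 * Gs κ b y ≤ M ^ 2 * (π / κ) ^ ((n : ℝ) / 2) := by
    rw [← int_Gs hκ0 b, ← integral_const_mul]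
    refine integral_mono i3 ((integrable_Gs hκ0 b).const_mul _) fun y => ?_
    exact mul_le_mul_of_nonneg_right ((le_abs_self _).trans (sq_bdd hM y)) (Gs_pos _ _ _).le
  have hBn : 0 ≤ ∫ y, |w y| ^ (p + 1) * Gs κ b y :=
    integral_nonneg fun y => mul_nonneg (by positivity) (Gs_pos _ _ _).le
  set A := ∫ y, (∑ i, pd i w y ^ 2) * Gs κ b y
  set Bi := ∫ y, |w y| ^ (p + 1) * Gs κ b y
  set Ci := ∫ y, w y ^ 2 * Gs κ b y
  have hNA : N * A ≤ K + M ^ 2 * B + 32 * M ^ 2 * 2 ^ ((n : ℝ) / 2) * κ := by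
    calc N * A ≤ N * ((K + M ^ 2 * ‖b‖ ^ 2) * (π / κ) ^ ((n : ℝ) / 2)
      + 4 * M ^ 2 * (1 / 2 - 2 * κ) ^ 2 * ((2 / κ) * (π / (κ / 2)) ^ ((n : ℝ) / 2))) := by gcongr
      _ = (K + M ^ 2 * ‖b‖ ^ 2) * (N * (π / κ) ^ ((n : ℝ) / 2))
        + 4 * M ^ 2 * (1 / 2 - 2 * κ) ^ 2 * ((2 / κ) * (N * (π / (κ / 2)) ^ ((n : ℝ) / 2))) := by
          ring
      _ = (K + M ^ 2 * ‖b‖ ^ 2)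
        + 4 * M ^ 2 * (1 / 2 - 2 * κ) ^ 2 * ((2 / κ) * 2 ^ ((n : ℝ) / 2)) := by
          rw [hN1, hN2, mul_one]
      _ ≤ (K + M ^ 2 * B) + 4 * M ^ 2 * (2 * κ) ^ 2 * ((2 / κ) * 2 ^ ((n : ℝ) / 2)) := by
          have : (1 / 2 - 2 * κ) ^ 2 ≤ (2 * κ) ^ 2 := by nlinarith
          gcongr
      _ = _ := by field_simp; ring
  have hNC : N * Ci ≤ M ^ 2 := by
    calc N * Ci ≤ N * (M ^ 2 * (π / κ) ^ ((n : ℝ) / 2)) := by gcongr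
      _ = M ^ 2 * (N * (π / κ) ^ ((n : ℝ) / 2)) := by ring
      _ = M ^ 2 := by rw [hN1, mul_one]
  set x := (4 * κ) ^ (-((p + 1) / (p - 1))) with hx
  set z := (4 * κ) ^ (-(2 / (p - 1)))
  have hx0 : 0 < x := by positivity
  have hz0 : 0 < z := by positivity
  have hx1 : (4 * κ) ^ (1 - (p + 1) / (p - 1)) = 4 * κ * x := by
    rw [hx, sub_eq_add_neg, Real.rpow_add (by positivity), Real.rpow_one]
  have hE : Ecal n p w κ b = (1 / 2) * x * (N * A) - (1 / (p + 1)) * x * (N * Bi)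
      + (1 / (2 * (p - 1))) * z * (N * Ci) := by
    unfold Ecal; ring
  have hc : 0 < 1 / (2 * (p - 1)) := by
    have : 0 < p - 1 := by linarith
    positivity
  have hc2 : 0 ≤ (1 / (p + 1)) * x * (N * Bi) := by
    have : 0 < p + 1 := by linarith
    positivity
  rw [hE, hx1]
  have e1 : (1 / 2) * x * (N * A) ≤
    (1 / 2) * x * (K + M ^ 2 * B + 32 * M ^ 2 * 2 ^ ((n : ℝ) / 2) * κ) := by gcongr
  have e2 : (1 / (2 * (p - 1))) * z * (N * Ci) ≤ (1 / (2 * (p - 1))) * z * M ^ 2 :=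
    mul_le_mul_of_nonneg_left hNC (by positivity)
  linarith

end fin2

theorem selfsimilar_translation_invariance
    (n : ℕ) (p : ℝ) (hp : 1 < p) (w : EuclideanSpace ℝ (Fin n) → ℝ)
    (hsmooth : ContDiff ℝ (⊤ : ℕ∞) w)
    (hbd : ∃ M : ℝ, ∀ y, |w y| ≤ M)
    (heq : ∀ y, lap w y - (1 / 2) * fderiv ℝ w y y - w y / (p - 1)
        + |w y| ^ (p - 1) * w y = 0)
    (u : EuclideanSpace ℝ (Fin n) → ℝ → ℝ)
    (hu : ∀ (x : EuclideanSpace ℝ (Fin n)) (t : ℝ), t < 0 →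
        u x t = (-t) ^ (-(1 / (p - 1))) * w (((-t) ^ (-(1 / 2) : ℝ)) • x))
    (x₀ : EuclideanSpace ℝ (Fin n)) (t₀ : ℝ) (ht₀ : t₀ ≤ 0) (θ : ℝ)
    (hΘ0 : Tendsto (fun s => GKenergy n p u s 0 0) (nhdsWithin 0 (Set.Iio 0)) (nhds θ))
    (hΘ1 : Tendsto (fun s => GKenergy n p u s x₀ t₀) (nhdsWithin 0 (Set.Iio 0)) (nhds θ)) :
    ∀ (a : ℝ) (x : EuclideanSpace ℝ (Fin n)) (t : ℝ), t < 0 →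
      u (a • x₀ + x) (a ^ 2 * t₀ + t) = u x t := by
  obtain ⟨M, hM⟩ := hbd
  have hM0 : 0 ≤ M := (abs_nonneg _).trans (hM 0)
  have hp1 : 0 < p - 1 := by linarith
  have heq' : ∀ y, ∑ i, pd i (pd i w) y = (w y / (p - 1) - |w y| ^ (p - 1) * w y)
      + (1 / 2) * ∑ i, y i * pd i w y := by
    intro y
    have h1 := heq y
    rw [fderiv_eq_sum] at h1
    have h2 : lap w y = ∑ i, pd i (pd i w) y := rfl
    rw [h2] at h1
    linarith
  have hf : ∀ y, |w y / (p - 1) - |w y| ^ (p - 1) * w y| ≤ M / (p - 1) + M ^ (p - 1) * M := by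
    intro y
    refine (abs_sub _ _).trans ?_
    rw [abs_div, abs_mul, abs_of_pos hp1]
    have := abs_rpow_bdd hM hp1.le y
    have := hM y
    gcongr
  obtain ⟨K, hK⟩ := cacc hsmooth hM hf heq'
  have hS : ∀ κ : ℝ, 0 < κ → ∀ b, Integrable (fun y => (∑ i, pd i w y ^ 2) * Gs κ b y) :=
    fun κ hκ b => (hK κ hκ b).1
  have hq : (0 : ℝ) < 1 / 4 := by norm_num
  set N := (1 / 4 / π) ^ ((n : ℝ) / 2) with hN
  have hN0 : 0 < N := by positivity
  have hen0 : ∀ (x₁ : EuclideanSpace ℝ (Fin n)) (q : ℝ), 0 < q → GKenergy n p u (-q) x₁ 0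
      = N * ∫ y, hdens n p w y * Gs (1 / 4) ((q ^ (-(1 / 2) : ℝ)) • x₁) y := by
    intro x₁ q hq0
    rw [energy_eq hp hsmooth hu x₁ hq0 hq0 (t₀ := 0) (by ring)]
    have : q / (4 * q) = 1 / 4 := by field_simp
    rw [this, Ecal_quarter hp hsmooth hM _ (hS _ hq _)]
  have hθ : θ = N * ∫ y, hdens n p w y * Gs (1 / 4) 0 y := by
    refine tendsto_nhds_unique hΘ0 (tendsto_const_nhds.congr' ?_)
    filter_upwards [self_mem_nhdsWithin] with s hs
    have hs' : 0 < -s := by simpa using hs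
    have := hen0 0 (-s) hs'
    rw [neg_neg, smul_zero] at this
    exact this.symm
  rcases ht₀.lt_or_eq with hneg | hzero
  · -- here the density at `(x₀,t₀)` vanishes, hence `w = 0`
    have hθle : θ ≤ 0 := by
      obtain ⟨K0, K1, K2, hb⟩ := Ecal_bound hp hsmooth hM hf heq' (‖x₀‖ ^ 2 / (-t₀))
      have hx : Tendsto (fun s : ℝ => (t₀ + s) / s) (nhdsWithin 0 (Set.Iio 0)) atTop := by
        have h1 : Tendsto (fun s : ℝ => t₀ * s⁻¹ + 1) (nhdsWithin 0 (Set.Iio 0)) atTop :=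
          tendsto_atTop_add_const_right _ _
            ((tendsto_inv_nhdsLT_zero (𝕜 := ℝ)).const_mul_atBot_of_neg hneg)
        refine h1.congr' ?_
        filter_upwards [self_mem_nhdsWithin] with s hs
        have : s ≠ 0 := ne_of_lt hs
        field_simp
      have hlim : ∀ c : ℝ, 0 < c → Tendsto (fun x : ℝ => x ^ (-c)) atTop (nhds 0) :=
        fun c hc => tendsto_rpow_neg_atTop hc
      have hγ : 1 - (p + 1) / (p - 1) = -(2 / (p - 1)) := by field_simp; ring
      have hg : Tendsto (fun x : ℝ => K0 * x ^ (-((p + 1) / (p - 1)))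
          + K1 * x ^ (1 - (p + 1) / (p - 1)) + K2 * x ^ (-(2 / (p - 1)))) atTop (nhds 0) := by
        have h1 := (hlim ((p + 1) / (p - 1)) (by positivity)).const_mul K0
        have h2 := (hlim (2 / (p - 1)) (by positivity)).const_mul K1
        have h3 := (hlim (2 / (p - 1)) (by positivity)).const_mul K2
        rw [hγ]
        simpa using (h1.add h2).add h3
      refine le_of_tendsto_of_tendsto hΘ1 (hg.comp hx) ?_
      filter_upwards [self_mem_nhdsWithin, hx.eventually_ge_atTop 4] with s hs hs4
      have hs0 : s < 0 := hs
      have hq0 : 0 < -s := by linarith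
      have hm0 : 0 < -(t₀ + s) := by linarith
      have he := energy_eq hp hsmooth hu x₀ hq0 hm0 (t₀ := t₀) (by ring)
      rw [neg_neg] at he
      rw [he]
      have hk : 4 * (-(t₀ + s) / (4 * -s)) = (t₀ + s) / s := by
        have : s ≠ 0 := hs0.ne
        field_simp
      have := hb (-(t₀ + s) / (4 * -s)) (by linarith)
        (((-(t₀ + s)) ^ (-(1 / 2) : ℝ)) • x₀) ?_
      · rw [hk] at this
        exact this
      · rw [norm_smul, mul_pow, Real.norm_eq_abs, sq_abs, ← Real.rpow_natCast,
          ← Real.rpow_mul hm0.le]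
        norm_num
        rw [Real.rpow_neg_one, ← div_eq_inv_mul]
        apply div_le_div_of_nonneg_left (sq_nonneg _) (by linarith) (by linarith)
    have hvir := virial hp hsmooth hM (hS _ hq 0) heq'
    have i2 := (Gs_integrable_of_bdd (cont_abs_rpow hsmooth.continuous (by linarith : 0 ≤ p + 1))
      (abs_rpow_bdd hM (by linarith : 0 ≤ p + 1)) hq 0)
    have hnn : 0 ≤ ∫ y, |w y| ^ (p + 1) * Gs (1 / 4) 0 y :=
      integral_nonneg fun y => mul_nonneg (by positivity) (Gs_pos _ _ _).le
    rw [(hdens_int hp hsmooth hM hq 0 (hS _ hq 0)).2] at hθ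
    have hz : ∫ y, |w y| ^ (p + 1) * Gs (1 / 4) 0 y = 0 := by
      refine le_antisymm ?_ hnn
      set A := ∫ y, (∑ i, pd i w y ^ 2) * Gs (1 / 4) 0 y
      set B := ∫ y, |w y| ^ (p + 1) * Gs (1 / 4) 0 y
      set C := ∫ y, w y ^ 2 * Gs (1 / 4) 0 y
      have h1 : θ = N * ((1 / 2 - 1 / (p + 1)) * B) := by
        rw [hθ, ← hvir]
        field_simp
        ring
      have h2 : 0 < 1 / 2 - 1 / (p + 1) := by
        have : 1 / (p + 1) < 1 / 2 := one_div_lt_one_div_of_lt (by norm_num) (by linarith)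
        linarith
      by_contra hB
      push Not at hB
      have : 0 < N * ((1 / 2 - 1 / (p + 1)) * B) := by positivity
      linarith
    have hw0 : ∀ y, w y = 0 := by
      intro y
      have h1 := eq_zero_of_int_Gs (cont_abs_rpow hsmooth.continuous (by linarith : 0 ≤ p + 1))
        (fun y => by positivity) i2 hz y
      rw [Real.rpow_eq_zero (abs_nonneg _) (by linarith)] at h1
      exact abs_eq_zero.1 h1
    intro a x t ht
    rw [hu _ _ (by nlinarith [sq_nonneg a]), hu _ _ ht, hw0, hw0]
    simp
  · subst hzero
    set F : ℝ → ℝ := fun τ => ∫ y, hdens n p w y * Gs (1 / 4) (τ • x₀) y with hF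
    have hFd : ∀ τ, HasDerivAt F
        (-(τ / 2) * ∫ y, (∑ j, x₀ j * pd j w y) ^ 2 * Gs (1 / 4) (τ • x₀) y) τ :=
      fun τ => (F_deriv hp hsmooth hM hS heq' x₀ τ).2
    have hanti : AntitoneOn F (Set.Ici 0) := by
      refine antitoneOn_of_deriv_nonpos (convex_Ici 0)
        (fun τ _ => (hFd τ).continuousAt.continuousWithinAt)
        (fun τ _ => (hFd τ).differentiableAt.differentiableWithinAt) fun τ hτ => ?_
      rw [(hFd τ).deriv]
      have hτ0 : 0 < τ := by simpa using hτ
      have : 0 ≤ ∫ y, (∑ j, x₀ j * pd j w y) ^ 2 * Gs (1 / 4) (τ • x₀) y :=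
        integral_nonneg fun y => mul_nonneg (sq_nonneg _) (Gs_pos _ _ _).le
      nlinarith
    have hF0 : θ = N * F 0 := by rw [hθ, hF]; simp
    have hFlim : Tendsto (fun σ => N * F σ) atTop (nhds θ) := by
      have hs : Tendsto (fun σ : ℝ => -(σ ^ (-(2 : ℝ)))) atTop (nhdsWithin 0 (Set.Iio 0)) := by
        refine tendsto_nhdsWithin_iff.2 ⟨?_, ?_⟩
        · simpa using (tendsto_rpow_neg_atTop (by norm_num : (0 : ℝ) < 2)).neg
        · filter_upwards [eventually_gt_atTop 0] with σ hσ
          have : 0 < σ ^ (-(2 : ℝ)) := by positivity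
          simpa using this
      refine (hΘ1.comp hs).congr' ?_
      filter_upwards [eventually_gt_atTop 0] with σ hσ
      have h1 : 0 < σ ^ (-(2 : ℝ)) := by positivity
      simp only [Function.comp_apply]
      rw [hen0 x₀ _ h1, ← Real.rpow_mul hσ.le]
      norm_num [hF]
    have hFc : ∀ τ, 0 ≤ τ → F τ = F 0 := by
      intro τ hτ
      refine le_antisymm (hanti (Set.mem_Ici.2 le_rfl) hτ hτ) ?_
      have : θ ≤ N * F τ := by
        refine le_of_tendsto hFlim ?_
        filter_upwards [eventually_ge_atTop τ] with σ hσ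
        exact mul_le_mul_of_nonneg_left (hanti hτ (Set.mem_Ici.2 (hτ.trans hσ)) hσ) hN0.le
      rw [hF0] at this
      exact le_of_mul_le_mul_left this hN0
    have hd1 : HasDerivAt F 0 1 := by
      refine (hasDerivAt_const (1 : ℝ) (F 0)).congr_of_eventuallyEq ?_
      filter_upwards [eventually_gt_nhds (zero_lt_one' ℝ)] with τ hτ
      exact hFc τ hτ.le
    have hInteg := (hFd 1).unique hd1
    have hz : ∫ y, (∑ j, x₀ j * pd j w y) ^ 2 * Gs (1 / 4) ((1 : ℝ) • x₀) y = 0 := by linarith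
    have hD : ∀ y, fderiv ℝ w y x₀ = 0 := by
      intro y
      have hc : Continuous (fun y => (∑ j, x₀ j * pd j w y) ^ 2) :=
        (continuous_finsetSum _ fun j _ =>
          continuous_const.mul (contDiff_pd j hsmooth).continuous).pow 2
      have := eq_zero_of_int_Gs hc (fun y => sq_nonneg _)
        (F_deriv hp hsmooth hM hS heq' x₀ 1).1 hz y
      rw [fderiv_eq_sum]
      exact pow_eq_zero_iff (two_ne_zero) |>.1 this
    have hinv : ∀ (c : ℝ) (y : EuclideanSpace ℝ (Fin n)), w (c • x₀ + y) = w y := by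
      intro c y
      have hder : ∀ c : ℝ, HasDerivAt (fun c : ℝ => w (c • x₀ + y)) 0 c := by
        intro c
        have h1 : HasDerivAt (fun c : ℝ => c • x₀ + y) x₀ c := by
          simpa using ((hasDerivAt_id c).smul_const x₀).add_const y
        have h2 := ((hsmooth.differentiable (by simp)).differentiableAt
          (x := c • x₀ + y)).hasFDerivAt.comp_hasDerivAt c h1
        rw [hD] at h2
        exact h2
      have := is_const_of_deriv_eq_zero (fun c => (hder c).differentiableAt)
        (fun c => (hder c).deriv) c 0
      simpa using this
    intro a x t ht
    rw [mul_zero, zero_add, hu _ _ ht, hu _ _ ht, smul_add, smul_smul, hinv]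
end
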